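/- Let $\mathbb H=\mathbb R^3$ be the Heisenberg group with product $(x_1,y_1,t_1)\star(x_2,y_2,t_2)=(x_1+x_2,\,y_1+y_2,\,t_1+t_2+2(x_2y_1-x_1y_2))$, Korányi norm $\|(x,y,t)\|=((x^2+y^2)^2+t^2)^{1/4}$, metric $d(p,q)=\|q^{-1}\star p\|$, and Lebesgue measure; write $B(r)=\{p:\|p\|<r\}$. For a homeomorphism $f:\mathbb H\to\mathbb H$ (onto $\mathbb H$) and $p\in\mathbb H$ put $$H_f(p)=\limsup_{r\to0^+}\frac{\sup_{d(p,q)\le r}d(f(p),f(q))}{\inf_{d(p,q)\ge r}d(f(p),f(q))}\in[1,\infty].$$ The map $f$ is quasiconformal if $H_f$ is bounded on $\mathbb H$ by a finite constant, and $K$-quasiconformal if moreover $H_f\le K$ almost everywhere. Let $\mathcal Q_0(K)$ be the set of $K$-quasiconformal mappings $g$ of $\mathbb H$ with $g(0)=0$ and $\|g(p)\|=1$ for some $p$ with $\|p\|=1$. Given $R>0$ and $K\ge1$, there exists $R'=R'(K,R)>0$ such that $g(B(R))\subseteq B(R')$ for every $g\in\mathcal Q_0(K)$. -/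

import Mathlib

open MeasureTheory Filter Set Topology
open scoped ENNReal NNReal

noncomputable section

/-- The underlying space of the Heisenberg group: `ℝ³` with its usual topology and Lebesgue
measure. -/
abbrev HG : Type := ℝ × ℝ × ℝ

namespace Heis

/-- Heisenberg group product. -/
def mul (p q : HG) : HG :=
  (p.1 + q.1, p.2.1 + q.2.1, p.2.2 + q.2.2 + 2 * (q.1 * p.2.1 - p.1 * q.2.1))

/-- Heisenberg group inverse. -/
def inv (p : HG) : HG := (-p.1, -p.2.1, -p.2.2)

/-- Korányi norm. -/
def knorm (p : HG) : ℝ := ((p.1 ^ 2 + p.2.1 ^ 2) ^ 2 + p.2.2 ^ 2) ^ ((1 : ℝ) / 4)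

/-- Heisenberg (Korányi) metric `d(p,q) = ‖q⁻¹⋆p‖`. -/
def d (p q : HG) : ℝ := knorm (mul (inv q) p)

/-- Open ball for the Heisenberg metric. -/
def ball (p : HG) (r : ℝ) : Set HG := {q | d p q < r}

/-- Pointwise dilatation `H_f(p)`, with values in `[0,∞]`, so that an unbounded quotient gives
`∞`. For a homeomorphism `f` and `r > 0` the numerator and the denominator are positive and
finite. -/
def dilat (f : HG → HG) (p : HG) : ℝ≥0∞ :=
  limsup (fun r : ℝ =>
      (⨆ (q : HG) (_ : d p q ≤ r), ENNReal.ofReal (d (f p) (f q))) /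
        (⨅ (q : HG) (_ : r ≤ d p q), ENNReal.ofReal (d (f p) (f q))))
    (𝓝[>] 0)

/-- `f` is a quasiconformal mapping of `ℍ`: a homeomorphism of `ℍ` onto itself whose dilatation
is bounded by a finite constant at every point. -/
def IsQC (f : HG → HG) : Prop :=
  IsHomeomorph f ∧ ∃ M : ℝ≥0, ∀ p : HG, dilat f p ≤ (M : ℝ≥0∞)

/-- `f` is a `K`-quasiconformal mapping of `ℍ`. -/
def IsKQC (K : ℝ) (f : HG → HG) : Prop :=
  IsQC f ∧ ∀ᵐ p ∂(volume : Measure HG), dilat f p ≤ ENNReal.ofReal K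

/-- The class `𝒬₀(K)`. -/
def Q0 (K : ℝ) : Set (HG → HG) :=
  {g | IsKQC K g ∧ g 0 = 0 ∧ ∃ p : HG, knorm p = 1 ∧ knorm (g p) = 1}

end Heis

end

/-
Suppose `g ∈ 𝒬₀(K)` sends a point of `B(R)` to norm at least `2 ^ n`. The truncated logarithm
`u = min (log⁺ ‖g‖) (n log 2)` vanishes somewhere on each sphere of radius in `[0, 1]` and equals
`n log 2` somewhere on each sphere of radius in `[R, R + 1]`. Bounded distortion gives, at small
scales `r` around almost every point `x`, `(osc_{B(x, r)} u) ^ 4 ≲ ν (B(x, r))`, where `ν` is the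
pullback under `g` of the measure with density `max(1, ‖·‖) ^ (-4)` on a large ball: its total mass
is of order `n`, the logarithmic factor that a power weight cannot avoid. Such a control of the
oscillation makes `u` absolutely continuous along almost all horizontal curves, and since every
group element is a product of five horizontal ones, this yields a Poincaré inequality with energy
`ν`. Chaining over dyadic scales from points on the two families of spheres to a common large ball,
averaged over the radius, bounds `n log 2` by `C (1 + n ^ (1/4))` with `C = C(K, R)`, which fails
for `n` large. No integrability of the Jacobian of `g` is needed, because `ν` stays a measure.
-/

noncomputable section

section Holder

lemma lintegral_le_rpow_lintegral_mul_rpow_measure_univ {α : Type*} [MeasurableSpace α]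
    {p q : ℝ} (hpq : p.HolderConjugate q) (μ : Measure α) {f : α → ℝ≥0∞}
    (hf : AEMeasurable f μ) :
    ∫⁻ a, f a ∂μ ≤ (∫⁻ a, f a ^ p ∂μ) ^ (1 / p) * μ univ ^ (1 / q) := by
  simpa using ENNReal.lintegral_mul_le_Lp_mul_Lq μ hpq hf (aemeasurable_const (b := (1 : ℝ≥0∞)))

lemma sum_rpow_one_div_le {ι : Type*} (s : Finset ι) (f : ι → ℝ≥0∞) {p : ℝ} (hp : 1 ≤ p) :
    ∑ i ∈ s, f i ^ (1 / p) ≤ (s.card : ℝ≥0∞) ^ (1 - 1 / p) * (∑ i ∈ s, f i) ^ (1 / p) := by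
  have hp0 : 0 < p := by linarith
  have h := ENNReal.rpow_sum_le_const_mul_sum_rpow s (fun i => f i ^ (1 / p)) hp
  simp only [← ENNReal.rpow_mul, one_div_mul_cancel hp0.ne', ENNReal.rpow_one] at h
  have h' := ENNReal.rpow_le_rpow h (one_div_nonneg.2 hp0.le)
  rwa [← ENNReal.rpow_mul, mul_one_div_cancel hp0.ne', ENNReal.rpow_one,
    ENNReal.mul_rpow_of_nonneg _ _ (one_div_nonneg.2 hp0.le), ← ENNReal.rpow_mul,
    sub_mul, mul_one_div_cancel hp0.ne', one_mul] at h'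

lemma liminf_setLIntegral_le_of_subset {α : Type*} [MeasurableSpace α] {μ : Measure α}
    {p q : ℝ} (hpq : p.HolderConjugate q) {P : ℕ → α → ℝ≥0∞} (hP : ∀ k, AEMeasurable (P k) μ)
    {U V : Set α} (hVU : V ⊆ U) (hV : μ V ≠ ∞) :
    liminf (fun k => ∫⁻ t in V, P k t ∂μ) atTop ≤
      liminf (fun k => ∫⁻ t in U, P k t ^ p ∂μ) atTop ^ (1 / p) * μ V ^ (1 / q) := by
  have hp' : 0 ≤ 1 / p := one_div_nonneg.2 hpq.nonneg
  have hlim : liminf (fun k => ∫⁻ t in U, P k t ^ p ∂μ) atTop ^ (1 / p) =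
      liminf (fun k => (∫⁻ t in U, P k t ^ p ∂μ) ^ (1 / p)) atTop :=
    (ENNReal.monotone_rpow_of_nonneg hp').map_liminf_of_continuousAt _
      ENNReal.continuous_rpow_const.continuousAt
  rw [hlim, mul_comm, ← ENNReal.liminf_const_mul_of_ne_top
    (ENNReal.rpow_ne_top_of_nonneg (one_div_nonneg.2 hpq.symm.nonneg) hV)]
  refine liminf_le_liminf (Eventually.of_forall fun k => ?_)
  refine (lintegral_le_rpow_lintegral_mul_rpow_measure_univ hpq _ (hP k).restrict).trans ?_
  rw [Measure.restrict_apply_univ, mul_comm]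
  gcongr

end Holder

section MeanEDist

open scoped ProbabilityTheory

variable {X E : Type*} [MeasurableSpace X] [PseudoEMetricSpace E]

/-- The mean distance between the values of `u` at two independent points, one distributed
according to `P` and the other according to `Q`. -/
def meanEDist (u : X → E) (P Q : Measure X) : ℝ≥0∞ :=
  ∫⁻ y, ∫⁻ z, edist (u y) (u z) ∂Q ∂P

lemma meanEDist_dirac_dirac [MeasurableSingletonClass X] (u : X → E) (x y : X) :
    meanEDist u (Measure.dirac x) (Measure.dirac y) = edist (u x) (u y) := by
  simp only [meanEDist, lintegral_dirac]

lemma meanEDist_dirac_le_of_ae [MeasurableSingletonClass X] {u : X → E} {x : X} {Q : Measure X}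
    [IsProbabilityMeasure Q] {c : ℝ≥0∞} (h : ∀ᵐ z ∂Q, edist (u x) (u z) ≤ c) :
    meanEDist u (Measure.dirac x) Q ≤ c := by
  rw [meanEDist, lintegral_dirac]
  exact (lintegral_mono_ae h).trans_eq (by simp)

variable [TopologicalSpace X] [SecondCountableTopology X] [OpensMeasurableSpace X] {u : X → E}

lemma measurable_edist_prod (hu : Continuous u) :
    Measurable fun z : X × X => edist (u z.1) (u z.2) :=
  ((hu.comp continuous_fst).edist (hu.comp continuous_snd)).measurable

lemma meanEDist_comm (hu : Continuous u) (P Q : Measure X) [SFinite P] [SFinite Q] :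
    meanEDist u P Q = meanEDist u Q P := by
  rw [meanEDist, lintegral_lintegral_swap (measurable_edist_prod hu).aemeasurable]
  simp only [meanEDist, edist_comm]

lemma meanEDist_triangle (hu : Continuous u) (P Q W : Measure X) [IsProbabilityMeasure P]
    [IsProbabilityMeasure Q] [IsProbabilityMeasure W] :
    meanEDist u P W ≤ meanEDist u P Q + meanEDist u Q W := by
  have hQW : Measurable fun w => ∫⁻ z, edist (u w) (u z) ∂W :=
    (measurable_edist_prod hu).lintegral_prod_right'
  calc meanEDist u P W = ∫⁻ y, ∫⁻ _w, ∫⁻ z, edist (u y) (u z) ∂W ∂Q ∂P := by simp [meanEDist]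
    _ ≤ ∫⁻ y, ∫⁻ w, ∫⁻ z, (edist (u y) (u w) + edist (u w) (u z)) ∂W ∂Q ∂P := by
        gcongr with y w z
        exact edist_triangle _ _ _
    _ = ∫⁻ y, ((∫⁻ w, edist (u y) (u w) ∂Q) + meanEDist u Q W) ∂P := by
        congr with y
        simp only [lintegral_add_left measurable_const, lintegral_const, measure_univ, mul_one]
        rw [lintegral_add_right _ hQW, meanEDist]
    _ = _ := by
        rw [lintegral_add_right _ measurable_const]
        simp [meanEDist]

lemma meanEDist_cond_cond (hu : Continuous u) (μ : Measure X) [SFinite μ] (A B : Set X) :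
    meanEDist u μ[|A] μ[|B] =
      (μ B)⁻¹ * ((μ A)⁻¹ * ∫⁻ y in A, ∫⁻ z in B, edist (u y) (u z) ∂μ ∂μ) := by
  have hmeas : Measurable fun y => ∫⁻ z in B, edist (u y) (u z) ∂μ :=
    (measurable_edist_prod hu).lintegral_prod_right'
  simp only [meanEDist, ProbabilityTheory.cond, lintegral_smul_measure, smul_eq_mul,
    lintegral_const_mul _ hmeas]

end MeanEDist

section SphereSampling

lemma card_filter_abs_sub_lt_le (N : ℕ) (a : ℝ) {b : ℝ} (hb : 0 ≤ b) :
    (((Finset.range N).filter fun i : ℕ => |(i : ℝ) - a| < b).card : ℝ) ≤ 2 * b + 1 := by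
  have h1 : ((Finset.range N).filter fun i : ℕ => |(i : ℝ) - a| < b).card ≤
      (Finset.Icc ⌈a - b⌉ ⌊a + b⌋).card := by
    refine Finset.card_le_card_of_injOn (fun i : ℕ => (i : ℤ)) (fun i hi => ?_)
      Nat.cast_injective.injOn
    have hi := abs_lt.1 (Finset.mem_filter.1 (Finset.mem_coe.1 hi)).2
    refine Finset.mem_coe.2 (Finset.mem_Icc.2 ⟨Int.ceil_le.2 ?_, Int.le_floor.2 ?_⟩) <;>
    · push_cast; linarith
  have h2 : (((⌊a + b⌋ + 1 - ⌈a - b⌉).toNat : ℤ) : ℝ) ≤ 2 * b + 1 := by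
    rw [Int.toNat_eq_max]
    push_cast
    exact max_le (by linarith [Int.floor_le (a + b), Int.le_ceil (a - b)]) (by linarith)
  rw [Int.card_Icc] at h1
  exact le_trans (by exact_mod_cast h1) h2

variable {X : Type*} [PseudoMetricSpace X] [MeasurableSpace X] [OpensMeasurableSpace X]
  (ν : Measure X) {o : X} {N : ℕ} {x : ℕ → X} {R s : ℝ}

lemma sum_measure_ball_le (hx : ∀ i < N, dist (x i) o = R + i / N) (hs : 1 ≤ s * N) :
    ∑ i ∈ Finset.range N, ν (Metric.ball (x i) s) ≤ ENNReal.ofReal (3 * s * N) * ν univ := by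
  have hN : 0 < (N : ℝ) := Nat.cast_pos.2 <| Nat.pos_of_ne_zero fun h => by
    norm_num [h] at hs
  have overlap (y : X) : ∑ i ∈ Finset.range N, (Metric.ball (x i) s).indicator (1 : X → ℝ≥0∞) y ≤
      ENNReal.ofReal (3 * s * N) := by
    calc _ ≤ ∑ i ∈ Finset.range N,
          if |(i : ℝ) - (dist y o - R) * N| < s * N then (1 : ℝ≥0∞) else 0 := by
          refine Finset.sum_le_sum fun i hi => ?_
          by_cases hy : y ∈ Metric.ball (x i) s
          · have h : |dist (x i) o - dist y o| < s :=
              (abs_dist_sub_le _ _ _).trans_lt (by rwa [dist_comm])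
            have h' : |(i : ℝ) - (dist y o - R) * N| < s * N := by
              rw [show (i : ℝ) - (dist y o - R) * N = (R + i / N - dist y o) * N by
                field_simp; ring, abs_mul, abs_of_pos hN, ← hx i (Finset.mem_range.1 hi)]
              gcongr
            simp [hy, h']
          · simp [hy]
      _ ≤ _ := by
          rw [Finset.sum_boole, ← ENNReal.ofReal_natCast]
          refine ENNReal.ofReal_le_ofReal ?_
          linarith [card_filter_abs_sub_lt_le N ((dist y o - R) * N) (b := s * N) (by linarith)]
  calc ∑ i ∈ Finset.range N, ν (Metric.ball (x i) s)
      = ∫⁻ y, ∑ i ∈ Finset.range N, (Metric.ball (x i) s).indicator 1 y ∂ν := by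
        rw [lintegral_finsetSum _ fun i _ =>
          measurable_one.indicator Metric.isOpen_ball.measurableSet]
        simp_rw [lintegral_indicator_one Metric.isOpen_ball.measurableSet]
    _ ≤ ∫⁻ _, ENNReal.ofReal (3 * s * N) ∂ν := lintegral_mono overlap
    _ = _ := lintegral_const _

lemma sum_rpow_measure_ball_le (hx : ∀ i < N, dist (x i) o = R + i / N) (hs : 1 ≤ s * N) {p : ℝ}
    (hp : 1 ≤ p) :
    ∑ i ∈ Finset.range N, ν (Metric.ball (x i) s) ^ (1 / p) ≤
      N * (ENNReal.ofReal (3 * s) * ν univ) ^ (1 / p) := by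
  have hN : (N : ℝ≥0∞) ≠ 0 := fun h => by norm_num [Nat.cast_eq_zero.1 h] at hs
  have hp' : 0 ≤ 1 / p := one_div_nonneg.2 (by linarith)
  calc _ ≤ (N : ℝ≥0∞) ^ (1 - 1 / p) * (ENNReal.ofReal (3 * s * N) * ν univ) ^ (1 / p) := by
        refine (sum_rpow_one_div_le _ _ hp).trans ?_
        rw [Finset.card_range]
        gcongr
        exact sum_measure_ball_le ν hx hs
    _ = (N : ℝ≥0∞) ^ (1 - 1 / p) * (N : ℝ≥0∞) ^ (1 / p) *
          (ENNReal.ofReal (3 * s) * ν univ) ^ (1 / p) := by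
        rw [ENNReal.ofReal_mul' N.cast_nonneg, ENNReal.ofReal_natCast, mul_right_comm, mul_comm,
          mul_comm _ (N : ℝ≥0∞), ENNReal.mul_rpow_of_nonneg _ _ hp']
        ring
    _ = _ := by
        rw [← ENNReal.rpow_add _ _ hN (ENNReal.natCast_ne_top N), sub_add_cancel, ENNReal.rpow_one]

lemma sum_sum_rpow_measure_ball_le {p Λ T : ℝ} {J : ℕ}
    (hx : ∀ i < N, dist (x i) o = R + i / N) (hp : 1 ≤ p) (hΛT : 1 ≤ Λ * T) (hN : 2 ^ J ≤ N) :
    ∑ j ∈ Finset.range J, ∑ i ∈ Finset.range N,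
        ν (Metric.ball (x i) (Λ * (T / 2 ^ j))) ^ (1 / p) ≤
      N * (ENNReal.ofReal (3 * (Λ * T)) ^ (1 / p) * (1 - (2⁻¹ : ℝ≥0∞) ^ (1 / p))⁻¹ *
        ν univ ^ (1 / p)) := by
  have hp' : 0 ≤ 1 / p := one_div_nonneg.2 (by linarith)
  set b : ℝ≥0∞ := (2⁻¹ : ℝ≥0∞) ^ (1 / p)
  set D := ENNReal.ofReal (3 * (Λ * T)) ^ (1 / p)
  have scale : ∀ j ∈ Finset.range J, ∑ i ∈ Finset.range N,
      ν (Metric.ball (x i) (Λ * (T / 2 ^ j))) ^ (1 / p) ≤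
        N * (D * b ^ j * ν univ ^ (1 / p)) := by
    intro j hj
    have hjN : (2 : ℝ) ^ j ≤ N := by
      exact_mod_cast (pow_le_pow_right₀ one_le_two (Finset.mem_range.1 hj).le).trans hN
    have hs : 1 ≤ Λ * (T / 2 ^ j) * N := by
      calc (1 : ℝ) ≤ Λ * T := hΛT
        _ = Λ * (T / 2 ^ j) * 2 ^ j := by field_simp
        _ ≤ _ := by
          gcongr
          rw [← mul_div_assoc]
          positivity
    refine (sum_rpow_measure_ball_le ν hx hs hp).trans_eq ?_
    rw [← mul_div_assoc, ← mul_div_assoc, ENNReal.ofReal_div_of_pos (by positivity),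
      ENNReal.mul_rpow_of_nonneg _ _ hp', ENNReal.div_rpow_of_nonneg _ _ hp', div_eq_mul_inv,
      ENNReal.ofReal_pow zero_le_two, ENNReal.ofReal_ofNat, ← ENNReal.inv_rpow,
      ENNReal.inv_pow, ← ENNReal.rpow_natCast, ← ENNReal.rpow_mul, mul_comm (j : ℝ),
      ENNReal.rpow_mul, ENNReal.rpow_natCast]
  calc _ ≤ ∑ j ∈ Finset.range J, N * (D * b ^ j * ν univ ^ (1 / p)) := Finset.sum_le_sum scale
    _ = N * (D * (∑ j ∈ Finset.range J, b ^ j) * ν univ ^ (1 / p)) := by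
        rw [← Finset.mul_sum, ← Finset.sum_mul, ← Finset.mul_sum]
    _ ≤ _ := by
        rw [← ENNReal.tsum_geometric]
        gcongr
        exact ENNReal.sum_le_tsum _

end SphereSampling

section Chaining

lemma exists_dyadic_scale_edist_le_one {X E : Type*} [PseudoMetricSpace X] [ProperSpace X]
    [PseudoEMetricSpace E] {u : X → E} (hu : Continuous u) (o : X) (T : ℝ) :
    ∃ J : ℕ, ∀ x y, dist x o ≤ T → dist x y < T / 2 ^ J → edist (u x) (u y) ≤ 1 := by
  have hunif := (isCompact_closedBall o T).uniformContinuousAt_of_continuousAt u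
    (fun a _ => hu.continuousAt) (edist_mem_uniformity one_pos)
  obtain ⟨δ, hδ, hδ'⟩ := Metric.mem_uniformity_dist.1 hunif
  obtain ⟨J, hJ⟩ := pow_unbounded_of_one_lt (T / δ) one_lt_two
  refine ⟨J, fun x y hx hxy => (hδ' (hxy.trans ?_) hx).le⟩
  rwa [div_lt_iff₀ (by positivity), mul_comm, ← div_lt_iff₀ hδ]

open ProbabilityTheory

variable {X E : Type*} [MetricSpace X] [MeasurableSpace X] [PseudoEMetricSpace E]

/-- A weak Poincaré inequality for `u : X → E`. The mean oscillation of `u` between a ball and a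
concentric or eccentric ball inside it of half the radius is controlled by the energy `ν` of an
enlarged ball. With `ν` the `p`-energy measure of `u` and `p` the homogeneous dimension of `X`, the
inequality has this scale-free form. -/
def PoincareIneq (μ ν : Measure X) (u : X → E) (C : ℝ≥0∞) (Λ p : ℝ) : Prop :=
  ∀ (x x' : X) (r : ℝ), 0 < r → Metric.ball x' (r / 2) ⊆ Metric.ball x r →
    meanEDist u μ[|Metric.ball x' (r / 2)] μ[|Metric.ball x r] ≤
      C * ν (Metric.ball x (Λ * r)) ^ (1 / p)

lemma isProbabilityMeasure_cond_ball [ProperSpace X] (μ : Measure X) [μ.IsOpenPosMeasure]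
    [IsFiniteMeasureOnCompacts μ] (x : X) {r : ℝ} (hr : 0 < r) :
    IsProbabilityMeasure μ[|Metric.ball x r] :=
  cond_isProbabilityMeasure_of_finite (Metric.measure_ball_pos μ x hr).ne'
    measure_ball_lt_top.ne

variable [ProperSpace X] [BorelSpace X] {μ ν : Measure X} [μ.IsOpenPosMeasure]
  [IsFiniteMeasureOnCompacts μ] {u : X → E} {C : ℝ≥0∞} {Λ p : ℝ}

lemma meanEDist_dirac_cond_ball_le_sum (hu : Continuous u) (x : X) {T : ℝ} (hT : 0 < T) (J : ℕ) :
    meanEDist u (Measure.dirac x) μ[|Metric.ball x T] ≤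
      meanEDist u (Measure.dirac x) μ[|Metric.ball x (T / 2 ^ J)] +
      ∑ j ∈ Finset.range J,
        meanEDist u μ[|Metric.ball x (T / 2 ^ j / 2)] μ[|Metric.ball x (T / 2 ^ j)] := by
  induction J with
  | zero => simp
  | succ J ih =>
    have := isProbabilityMeasure_cond_ball μ x (r := T / 2 ^ J) (by positivity)
    have := isProbabilityMeasure_cond_ball μ x (r := T / 2 ^ J / 2) (by positivity)
    refine ih.trans ?_
    rw [Finset.sum_range_succ, add_comm (∑ j ∈ Finset.range J, _), ← add_assoc, pow_succ,
      ← div_div]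
    gcongr
    exact meanEDist_triangle hu _ _ _

lemma PoincareIneq.meanEDist_dirac_cond_ball_le (h : PoincareIneq μ ν u C Λ p) (hu : Continuous u)
    (hp : 1 ≤ p) {o x : X} {T : ℝ} (hT : 0 < T) (hx : dist x o ≤ T) {J : ℕ}
    (hJ : ∀ y, dist x y < T / 2 ^ J → edist (u x) (u y) ≤ 1) :
    meanEDist u (Measure.dirac x) μ[|Metric.ball o (2 * T)] ≤
      1 + ∑ j ∈ Finset.range J, C * ν (Metric.ball x (Λ * (T / 2 ^ j))) ^ (1 / p) +
        C * ν univ ^ (1 / p) := by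
  have hTJ : 0 < T / 2 ^ J := by positivity
  have := isProbabilityMeasure_cond_ball μ x hT
  have := isProbabilityMeasure_cond_ball μ x hTJ
  have := isProbabilityMeasure_cond_ball μ o (r := 2 * T) (by positivity)
  have small_ball : meanEDist u (Measure.dirac x) μ[|Metric.ball x (T / 2 ^ J)] ≤ 1 :=
    meanEDist_dirac_le_of_ae <|
      (ae_cond_mem Metric.isOpen_ball.measurableSet).mono fun y hy =>
        hJ y (by rwa [dist_comm])
  have halving (j : ℕ) : meanEDist u μ[|Metric.ball x (T / 2 ^ j / 2)]
      μ[|Metric.ball x (T / 2 ^ j)] ≤ C * ν (Metric.ball x (Λ * (T / 2 ^ j))) ^ (1 / p) := by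
    have hTj : 0 < T / 2 ^ j := by positivity
    exact h x x _ hTj (Metric.ball_subset_ball (by linarith))
  have recentring : meanEDist u μ[|Metric.ball x T] μ[|Metric.ball o (2 * T)] ≤
      C * ν (Metric.ball o (Λ * (2 * T))) ^ (1 / p) := by
    have := h o x (2 * T) (by positivity)
    rw [mul_div_cancel_left₀ T two_ne_zero] at this
    exact this (Metric.ball_subset_ball' (by linarith))
  calc _ ≤ meanEDist u (Measure.dirac x) μ[|Metric.ball x T] +
        meanEDist u μ[|Metric.ball x T] μ[|Metric.ball o (2 * T)] := meanEDist_triangle hu _ _ _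
    _ ≤ (1 + ∑ j ∈ Finset.range J, C * ν (Metric.ball x (Λ * (T / 2 ^ j))) ^ (1 / p)) +
        C * ν univ ^ (1 / p) := by
      refine add_le_add ((meanEDist_dirac_cond_ball_le_sum hu x hT J).trans ?_)
        (recentring.trans ?_)
      · gcongr with j
        exact halving j
      · gcongr
        exact subset_univ _

/-- The factor with which the total energy bounds the sum over dyadic scales of the oscillations of
a function along a chain of balls of radii at most `T`. -/
def chainConst (Λ p T : ℝ) : ℝ≥0∞ :=
  1 + ENNReal.ofReal (3 * (Λ * T)) ^ (1 / p) * (1 - (2⁻¹ : ℝ≥0∞) ^ (1 / p))⁻¹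

lemma chainConst_ne_top (Λ T : ℝ) (hp : 0 < p) : chainConst Λ p T ≠ ∞ := by
  have hp' : 0 < 1 / p := one_div_pos.2 hp
  have hgeom : (1 - (2⁻¹ : ℝ≥0∞) ^ (1 / p))⁻¹ ≠ ∞ := by
    rw [Ne, ENNReal.inv_eq_top, tsub_eq_zero_iff_le, not_le]
    exact ENNReal.rpow_lt_one (by norm_num) hp'
  exact ENNReal.add_ne_top.2 ⟨ENNReal.one_ne_top, ENNReal.mul_ne_top
    (ENNReal.rpow_ne_top_of_nonneg hp'.le ENNReal.ofReal_ne_top) hgeom⟩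

lemma PoincareIneq.sum_meanEDist_dirac_le (h : PoincareIneq μ ν u C Λ p) (hu : Continuous u)
    (hp : 1 ≤ p) (hΛ : 1 ≤ Λ) {o : X} {R T : ℝ} (hR : 0 ≤ R) (hT : R + 1 ≤ T) {J N : ℕ}
    (hJ : ∀ x y, dist x o ≤ T → dist x y < T / 2 ^ J → edist (u x) (u y) ≤ 1)
    (hN : 2 ^ J ≤ N) {x : ℕ → X} (hx : ∀ i < N, dist (x i) o = R + i / N) :
    ∑ i ∈ Finset.range N, meanEDist u (Measure.dirac (x i)) μ[|Metric.ball o (2 * T)] ≤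
      N * (1 + C * (chainConst Λ p T * ν univ ^ (1 / p))) := by
  have hxT : ∀ i < N, dist (x i) o ≤ T := fun i hi => by
    have : (i : ℝ) / N ≤ 1 := div_le_one_of_le₀ (by exact_mod_cast hi.le) N.cast_nonneg
    linarith [hx i hi]
  calc _ ≤ ∑ i ∈ Finset.range N,
        (1 + ∑ j ∈ Finset.range J, C * ν (Metric.ball (x i) (Λ * (T / 2 ^ j))) ^ (1 / p) +
          C * ν univ ^ (1 / p)) := by
        refine Finset.sum_le_sum fun i hi => ?_
        have hiT := hxT i (Finset.mem_range.1 hi)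
        exact h.meanEDist_dirac_cond_ball_le hu hp (by linarith) hiT fun y hy => hJ _ y hiT hy
    _ = N + C * (∑ j ∈ Finset.range J, ∑ i ∈ Finset.range N,
          ν (Metric.ball (x i) (Λ * (T / 2 ^ j))) ^ (1 / p)) + N * (C * ν univ ^ (1 / p)) := by
        rw [Finset.sum_comm]
        simp only [Finset.sum_add_distrib, Finset.sum_const, Finset.card_range, nsmul_eq_mul,
          mul_one, Finset.mul_sum]
    _ ≤ N + C * (N * (ENNReal.ofReal (3 * (Λ * T)) ^ (1 / p) *
          (1 - (2⁻¹ : ℝ≥0∞) ^ (1 / p))⁻¹ * ν univ ^ (1 / p))) + N * (C * ν univ ^ (1 / p)) := by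
        gcongr
        exact sum_sum_rpow_measure_ball_le ν hx hp (by nlinarith) hN
    _ = _ := by
        rw [chainConst]
        ring

theorem PoincareIneq.edist_le_of_forall_sphere (h : PoincareIneq μ ν u C Λ p) (hu : Continuous u)
    (hp : 1 ≤ p) (hΛ : 1 ≤ Λ) {o : X} {R : ℝ} (hR : 0 ≤ R) {α β : E}
    (hα : ∀ τ ∈ Icc (0 : ℝ) 1, ∃ x, dist x o = τ ∧ u x = α)
    (hβ : ∀ τ ∈ Icc (0 : ℝ) 1, ∃ x, dist x o = R + τ ∧ u x = β) :
    edist α β ≤ 2 * (1 + C * (chainConst Λ p (R + 1) * ν univ ^ (1 / p))) := by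
  obtain ⟨J, hJ⟩ := exists_dyadic_scale_edist_le_one hu o (R + 1)
  set N := 2 ^ J with hN
  have hτ : ∀ i < N, (i : ℝ) / N ∈ Icc (0 : ℝ) 1 := fun i hi =>
    ⟨by positivity, div_le_one_of_le₀ (by exact_mod_cast hi.le) N.cast_nonneg⟩
  have : Nonempty X := ⟨o⟩
  choose! x hx hxα using fun i hi => hα _ (hτ i hi)
  choose! y hy hyβ using fun i hi => hβ _ (hτ i hi)
  have := isProbabilityMeasure_cond_ball μ o (r := 2 * (R + 1)) (by positivity)
  have pointwise : ∀ i ∈ Finset.range N, edist α β ≤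
      meanEDist u (Measure.dirac (x i)) μ[|Metric.ball o (2 * (R + 1))] +
        meanEDist u (Measure.dirac (y i)) μ[|Metric.ball o (2 * (R + 1))] := fun i hi => by
    have hi := Finset.mem_range.1 hi
    rw [← hxα i hi, ← hyβ i hi, ← meanEDist_dirac_dirac, meanEDist_comm hu (Measure.dirac (y i))]
    exact meanEDist_triangle hu _ _ _
  have averaged : N * edist α β ≤
      N * (2 * (1 + C * (chainConst Λ p (R + 1) * ν univ ^ (1 / p)))) := by
    calc N * edist α β = ∑ _i ∈ Finset.range N, edist α β := by simp
      _ ≤ _ := Finset.sum_le_sum pointwise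
      _ ≤ N * (1 + C * (chainConst Λ p (R + 1) * ν univ ^ (1 / p))) +
          N * (1 + C * (chainConst Λ p (R + 1) * ν univ ^ (1 / p))) := by
        rw [Finset.sum_add_distrib]
        exact add_le_add
          (h.sum_meanEDist_dirac_le hu hp hΛ le_rfl (by linarith) hJ hN.ge
            fun i hi => by rw [hx i hi, zero_add])
          (h.sum_meanEDist_dirac_le hu hp hΛ hR le_rfl hJ hN.ge hy)
      _ = _ := by ring
  exact (ENNReal.mul_le_mul_iff_right (by simp [hN]) (ENNReal.natCast_ne_top N)).1 averaged

end Chaining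

section Luzin

variable {X Y : Type*} [PseudoMetricSpace X] [MeasurableSpace X] [MeasurableSpace Y]
  {μ : Measure X} {m : Measure Y} {w : X → Y} {P : ℕ → X → ℝ≥0∞} {G : ℕ → Set X} {r : ℕ → ℝ}
  {C : ℝ≥0∞}

lemma measure_image_inter_iUnion_le_liminf {V : Set X} (hV : IsOpen V) (hG : Monotone G)
    (hr : Antitone r) (hr0 : Tendsto r atTop (𝓝 0)) (hC : C ≠ ∞)
    (hcov : ∀ k, ∀ s ⊆ G k, m (w '' s) ≤ C * ∫⁻ t in Metric.thickening (r k) s, P k t ∂μ) :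
    m (w '' (V ∩ ⋃ k, G k)) ≤ C * liminf (fun k => ∫⁻ t in V, P k t ∂μ) atTop := by
  let S : ℕ → Set X := fun k => {s | Metric.ball s (r k) ⊆ V} ∩ G k
  have hS : Monotone S := fun i j hij s hs =>
    ⟨(Metric.ball_subset_ball (hr hij)).trans hs.1, hG hij hs.2⟩
  have hVS : V ∩ ⋃ k, G k ⊆ ⋃ k, S k := by
    rintro s ⟨hsV, hsG⟩
    obtain ⟨ε, hε, hsub⟩ := Metric.isOpen_iff.1 hV s hsV
    obtain ⟨i, hi⟩ := (hr0.eventually_lt_const hε).exists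
    obtain ⟨j, hj⟩ := mem_iUnion.1 hsG
    exact mem_iUnion.2 ⟨max i j, (Metric.ball_subset_ball
      ((hr (le_max_left i j)).trans hi.le)).trans hsub, hG (le_max_right i j) hj⟩
  have bound (k : ℕ) : m (w '' S k) ≤ C * ∫⁻ t in V, P k t ∂μ := by
    refine (hcov k _ inter_subset_right).trans ?_
    gcongr
    intro t ht
    obtain ⟨s, hs, hst⟩ := Metric.mem_thickening_iff.1 ht
    exact hs.1 hst
  have himage : Monotone fun k => w '' S k := fun i j hij => image_mono (hS hij)
  calc m (w '' (V ∩ ⋃ k, G k)) ≤ m (⋃ k, w '' S k) := by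
        rw [← image_iUnion]
        exact measure_mono (image_mono hVS)
    _ = ⨆ k, m (w '' S k) := himage.measure_iUnion
    _ ≤ liminf (fun k => C * ∫⁻ t in V, P k t ∂μ) atTop := by
        refine iSup_le fun j => le_liminf_of_le (by isBoundedDefault) ?_
        filter_upwards [eventually_ge_atTop j] with k hk
        exact (measure_mono (himage hk)).trans (bound k)
    _ = _ := ENNReal.liminf_const_mul_of_ne_top hC

lemma measure_image_eq_zero_of_liminf_lt_top [μ.OuterRegular] {p q : ℝ}
    (hpq : p.HolderConjugate q) (hP : ∀ k, AEMeasurable (P k) μ) (hG : Monotone G)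
    (hr : Antitone r) (hr0 : Tendsto r atTop (𝓝 0)) (hC : C ≠ ∞)
    (hcov : ∀ k, ∀ s ⊆ G k, m (w '' s) ≤ C * ∫⁻ t in Metric.thickening (r k) s, P k t ∂μ)
    {U : Set X} (hU : IsOpen U) (hfin : liminf (fun k => ∫⁻ t in U, P k t ^ p ∂μ) atTop < ∞)
    {N : Set X} (hNU : N ⊆ U) (hNG : N ⊆ ⋃ k, G k) (hN : μ N = 0) : m (w '' N) = 0 := by
  set L := liminf (fun k => ∫⁻ t in U, P k t ^ p ∂μ) atTop ^ (1 / p)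
  have hL : L ≠ ∞ := ENNReal.rpow_ne_top_of_nonneg (one_div_nonneg.2 hpq.nonneg) hfin.ne
  have bound (ε : ℝ≥0∞) (hε : 0 < ε) (hεt : ε < ∞) : m (w '' N) ≤ C * (L * ε ^ (1 / q)) := by
    obtain ⟨V, hNV, hV, hVε⟩ := N.exists_isOpen_lt_of_lt ε (by rwa [hN])
    have hUV : μ (V ∩ U) ≤ ε := (measure_mono inter_subset_left).trans hVε.le
    calc m (w '' N) ≤ m (w '' ((V ∩ U) ∩ ⋃ k, G k)) :=
          measure_mono (image_mono (subset_inter (subset_inter hNV hNU) hNG))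
      _ ≤ C * liminf (fun k => ∫⁻ t in V ∩ U, P k t ∂μ) atTop :=
          measure_image_inter_iUnion_le_liminf (hV.inter hU) hG hr hr0 hC hcov
      _ ≤ C * (L * ε ^ (1 / q)) := by
          gcongr
          refine (liminf_setLIntegral_le_of_subset hpq hP inter_subset_right
            (hUV.trans_lt hεt).ne).trans ?_
          have := hpq.symm.nonneg
          gcongr
  have hlim : Tendsto (fun ε : ℝ≥0∞ => C * (L * ε ^ (1 / q))) (𝓝[>] 0) (𝓝 0) := by
    have h0 := (ENNReal.continuous_rpow_const (y := 1 / q)).tendsto 0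
    rw [ENNReal.zero_rpow_of_pos (one_div_pos.2 hpq.symm.pos)] at h0
    have h1 := ENNReal.Tendsto.const_mul (ENNReal.Tendsto.const_mul h0 (Or.inr hL)) (Or.inr hC)
    simp only [mul_zero] at h1
    exact h1.mono_left nhdsWithin_le_nhds
  refine le_antisymm (ge_of_tendsto hlim ?_) zero_le
  filter_upwards [Ioo_mem_nhdsGT ENNReal.zero_lt_top] with ε hε using bound ε hε.1 hε.2

lemma edist_le_volume_image_uIcc {w : ℝ → ℝ} (a b : ℝ) (hw : ContinuousOn w (uIcc a b)) :
    edist (w a) (w b) ≤ volume (w '' uIcc a b) :=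
  calc edist (w a) (w b) = volume (uIcc (w b) (w a)) := by
        rw [Real.volume_interval, edist_dist, Real.dist_eq]
    _ ≤ _ := by
        rw [uIcc_comm]
        exact measure_mono (intermediate_value_uIcc hw)

end Luzin

section EnergyDensity

variable {X : Type*} [PseudoMetricSpace X] [MeasurableSpace X]

/-- The density at scale `ε` of the energy `ν`. It serves as an upper gradient at scale `ε` of every
function whose oscillation on balls is controlled by the `p`-th root of `ν`. -/
def discGrad (ν : Measure X) (p ε : ℝ) (x : X) : ℝ≥0∞ :=
  (ENNReal.ofReal ε)⁻¹ * ν (Metric.ball x (2 * ε)) ^ (1 / p)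

/-- The points at which the oscillation of `u` on balls of radius at most `δ` is controlled, with
constant `D`, by the `p`-th root of the energy `ν`. -/
def oscSet (u : X → ℝ) (ν : Measure X) (p : ℝ) (D : ℝ≥0∞) (δ : ℝ) : Set X :=
  {x | ∀ r ∈ Ioc 0 δ, ∀ y, dist x y ≤ r → edist (u y) (u x) ≤ D * ν (Metric.ball x r) ^ (1 / p)}

lemma antitone_oscSet (u : X → ℝ) (ν : Measure X) (p : ℝ) (D : ℝ≥0∞) :
    Antitone (oscSet u ν p D) :=
  fun _ _ h _ hx r hr => hx r ⟨hr.1, hr.2.trans h⟩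

variable {u : X → ℝ} {ν : Measure X} {p ε : ℝ} {D : ℝ≥0∞} {γ : ℝ → X}

lemma volume_image_inter_Ico_le (hp : 0 ≤ p) (hε : 0 < ε) (hγ : LipschitzWith 1 γ) {s : Set ℝ}
    (hs : s ⊆ γ ⁻¹' oscSet u ν p D ε) (c : ℝ) :
    volume (u ∘ γ '' (s ∩ Ico c (c + ε))) ≤
      2 * D * ∫⁻ t in Metric.thickening (2 * ε) s ∩ Ico c (c + ε), discGrad ν p ε (γ t) := by
  rcases (s ∩ Ico c (c + ε)).eq_empty_or_nonempty with h0 | ⟨s₀, hs₀, hs₀I⟩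
  · simp [h0]
  have hdist : ∀ t ∈ Ico c (c + ε), dist s₀ t < ε := fun t ht => by
    rw [Real.dist_eq, abs_lt]
    constructor <;> linarith [hs₀I.1, hs₀I.2, ht.1, ht.2]
  have hdistγ : ∀ t ∈ Ico c (c + ε), dist (γ s₀) (γ t) < ε := fun t ht =>
    (hγ.dist_le_mul s₀ t).trans_lt (by simpa using hdist t ht)
  have hI : Ico c (c + ε) ⊆ Metric.thickening (2 * ε) s := fun t ht =>
    Metric.mem_thickening_iff.2 ⟨s₀, hs₀, by rw [dist_comm]; linarith [hdist t ht]⟩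
  set e := ν (Metric.ball (γ s₀) ε) ^ (1 / p)
  have himage : u ∘ γ '' (s ∩ Ico c (c + ε)) ⊆ Metric.closedEBall (u (γ s₀)) (D * e) := by
    rintro _ ⟨t, ht, rfl⟩
    exact hs hs₀ ε ⟨hε, le_rfl⟩ _ (hdistγ t ht.2).le
  have henergy : e ≤ ∫⁻ t in Ico c (c + ε), discGrad ν p ε (γ t) := by
    calc e = ∫⁻ _ in Ico c (c + ε), (ENNReal.ofReal ε)⁻¹ * e := by
          rw [setLIntegral_const, Real.volume_Ico, add_sub_cancel_left, mul_right_comm,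
            ENNReal.inv_mul_cancel (by simpa using hε) ENNReal.ofReal_ne_top, one_mul]
      _ ≤ _ := by
          refine setLIntegral_mono' measurableSet_Ico fun t ht => ?_
          have hball : Metric.ball (γ s₀) ε ⊆ Metric.ball (γ t) (2 * ε) :=
            Metric.ball_subset_ball' (by linarith [hdistγ t ht])
          simp only [discGrad, e]
          gcongr
  calc _ ≤ volume (Metric.closedEBall (u (γ s₀)) (D * e)) := measure_mono himage
    _ = 2 * D * e := by rw [Real.volume_closedEBall, mul_assoc]
    _ ≤ _ := by
      rw [inter_eq_self_of_subset_right hI]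
      gcongr

lemma volume_image_le_lintegral_discGrad (hp : 0 ≤ p) (hε : 0 < ε) (hγ : LipschitzWith 1 γ)
    {s : Set ℝ} (hs : s ⊆ γ ⁻¹' oscSet u ν p D ε) :
    volume (u ∘ γ '' s) ≤
      2 * D * ∫⁻ t in Metric.thickening (2 * ε) s, discGrad ν p ε (γ t) := by
  set U := Metric.thickening (2 * ε) s
  have hU : MeasurableSet U := Metric.isOpen_thickening.measurableSet
  let I : ℤ → Set ℝ := fun j => Ico (j • ε) (j • ε + ε)
  have hI : I = fun j => Ico (j • ε) ((j + 1) • ε) := by simp only [I, add_smul, one_smul]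
  have hcover : ⋃ j, I j = univ := by rw [hI]; exact iUnion_Ico_zsmul hε
  have hdisj : Pairwise (Function.onFun Disjoint I) := by
    rw [hI]; exact pairwise_disjoint_Ico_zsmul ε
  calc volume (u ∘ γ '' s) = volume (⋃ j, u ∘ γ '' (s ∩ I j)) := by
        rw [← image_iUnion, ← inter_iUnion, hcover, inter_univ]
    _ ≤ ∑' j, volume (u ∘ γ '' (s ∩ I j)) := measure_iUnion_le _
    _ ≤ ∑' j, 2 * D * ∫⁻ t in U ∩ I j, discGrad ν p ε (γ t) :=
        ENNReal.tsum_le_tsum fun j => volume_image_inter_Ico_le hp hε hγ hs _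
    _ = 2 * D * ∫⁻ t in U, discGrad ν p ε (γ t) := by
        rw [ENNReal.tsum_mul_left, ← lintegral_iUnion (fun j => hU.inter measurableSet_Ico)
          (fun i j hij => (hdisj hij).mono inter_subset_right inter_subset_right),
          ← inter_iUnion, hcover, inter_univ]

lemma measurable_discGrad [SecondCountableTopology X] [OpensMeasurableSpace X] (ν : Measure X)
    [SFinite ν] (p ε : ℝ) : Measurable (discGrad ν p ε) := by
  have h : MeasurableSet {z : X × X | dist z.2 z.1 < 2 * ε} :=
    (isOpen_lt (continuous_snd.dist continuous_fst) continuous_const).measurableSet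
  exact ((measurable_measure_prodMk_left h).pow_const _).const_mul _

lemma iUnion_oscSet {δ : ℕ → ℝ} (hδ : Tendsto δ atTop (𝓝 0)) (hδ0 : ∀ k, 0 < δ k) :
    ⋃ k, oscSet u ν p D (δ k) = {x | ∃ r > 0, x ∈ oscSet u ν p D r} := by
  ext x
  simp only [mem_iUnion, mem_ofPred_eq]
  refine ⟨fun ⟨k, hk⟩ => ⟨δ k, hδ0 k, hk⟩, fun ⟨r, hr, hx⟩ => ?_⟩
  obtain ⟨k, hk⟩ := (hδ.eventually_le_const hr).exists
  exact ⟨k, antitone_oscSet u ν p D hk hx⟩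

-- A finite constant `M` everywhere on `γ` only serves to make `u ∘ γ` map null sets to null sets,
-- so the final estimate involves the constant `D` that is valid almost everywhere.
theorem edist_le_liminf_lintegral_discGrad [SecondCountableTopology X] [BorelSpace X]
    [SFinite ν] {q : ℝ} (hpq : p.HolderConjugate q) (hγ : LipschitzWith 1 γ)
    (hu : Continuous (u ∘ γ)) {M : ℝ≥0∞} (hM : M ≠ ∞) (hD : D ≠ ∞)
    (hall : ∀ t, ∃ r > 0, γ t ∈ oscSet u ν p M r) (hae : ∀ᵐ t, ∃ r > 0, γ t ∈ oscSet u ν p D r)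
    {δ : ℕ → ℝ} (hδ : Antitone δ) (hδ0 : ∀ k, 0 < δ k) (hδlim : Tendsto δ atTop (𝓝 0))
    {V : Set ℝ} (hV : IsOpen V)
    (hfin : liminf (fun k => ∫⁻ t in V, discGrad ν p (δ k) (γ t) ^ p) atTop < ∞) {a b : ℝ}
    (hab : uIcc a b ⊆ V) :
    edist (u (γ a)) (u (γ b)) ≤
      2 * D * liminf (fun k => ∫⁻ t in V, discGrad ν p (δ k) (γ t)) atTop := by
  let G : ℝ≥0∞ → ℕ → Set ℝ := fun A k => γ ⁻¹' oscSet u ν p A (δ k)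
  have hG (A : ℝ≥0∞) : Monotone (G A) := fun i j hij =>
    preimage_mono (antitone_oscSet u ν p A (hδ hij))
  have hiUnion (A : ℝ≥0∞) : ⋃ k, G A k = {t | ∃ r > 0, γ t ∈ oscSet u ν p A r} := by
    rw [← preimage_iUnion, iUnion_oscSet hδlim hδ0]
    rfl
  have hr : Antitone fun k => 2 * δ k := fun i j hij => by simpa using hδ hij
  have hr0 : Tendsto (fun k => 2 * δ k) atTop (𝓝 0) := by simpa using hδlim.const_mul 2
  have hcov (A : ℝ≥0∞) (k : ℕ) (s : Set ℝ) (hs : s ⊆ G A k) : volume (u ∘ γ '' s) ≤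
      2 * A * ∫⁻ t in Metric.thickening (2 * δ k) s, discGrad ν p (δ k) (γ t) :=
    volume_image_le_lintegral_discGrad hpq.nonneg (hδ0 k) hγ hs
  have hmeas (k : ℕ) : AEMeasurable fun t => discGrad ν p (δ k) (γ t) :=
    ((measurable_discGrad ν p (δ k)).comp hγ.continuous.measurable).aemeasurable
  have hnull : volume (u ∘ γ '' (uIcc a b \ ⋃ k, G D k)) = 0 := by
    refine measure_image_eq_zero_of_liminf_lt_top hpq hmeas (hG M) hr hr0
      (ENNReal.mul_ne_top ENNReal.ofNat_ne_top hM) (hcov M) hV hfin (sdiff_subset.trans hab) ?_ ?_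
    · rw [hiUnion M, eq_univ_of_forall (s := {t | _}) hall]
      exact subset_univ _
    · rw [hiUnion]
      exact measure_mono_null (sdiff_subset_compl _ _) hae
  calc edist (u (γ a)) (u (γ b)) ≤ volume (u ∘ γ '' uIcc a b) :=
        edist_le_volume_image_uIcc a b hu.continuousOn
    _ ≤ volume (u ∘ γ '' (uIcc a b \ ⋃ k, G D k) ∪ u ∘ γ '' (V ∩ ⋃ k, G D k)) := by
        rw [← image_union]
        refine measure_mono (image_mono fun t ht => ?_)
        by_cases h : t ∈ ⋃ k, G D k
        exacts [Or.inr ⟨hab ht, h⟩, Or.inl ⟨ht, h⟩]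
    _ ≤ 0 + volume (u ∘ γ '' (V ∩ ⋃ k, G D k)) := (measure_union_le _ _).trans_eq (by rw [hnull])
    _ ≤ _ := by
        rw [zero_add]
        exact measure_image_inter_iUnion_le_liminf hV (hG D) hr hr0
          (ENNReal.mul_ne_top ENNReal.ofNat_ne_top hD) (hcov D)

end EnergyDensity

section Dilatation

variable {X Y : Type*} [PseudoMetricSpace X] [PseudoMetricSpace Y]

/-- The pointwise dilatation `H_f(x)` of a map `f` between metric spaces. -/
def dilatation (f : X → Y) (x : X) : ℝ≥0∞ :=
  limsup (fun r : ℝ => (⨆ (y : X) (_ : dist x y ≤ r), edist (f x) (f y)) /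
    (⨅ (y : X) (_ : r ≤ dist x y), edist (f x) (f y))) (𝓝[>] 0)

lemma exists_forall_dist_le_of_dilatation_lt {f : X → Y} {x : X} {H : ℝ≥0}
    (h : dilatation f x < H) : ∃ δ > 0, ∀ r ∈ Ioc 0 δ, ∀ y z, dist x y ≤ r → r ≤ dist x z →
      dist (f x) (f y) ≤ H * dist (f x) (f z) := by
  have hev := eventually_lt_of_limsup_lt h
  obtain ⟨δ, hδ, hsub⟩ := mem_nhdsGT_iff_exists_Ioc_subset.1 hev
  refine ⟨δ, hδ, fun r hr y z hy hz => ?_⟩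
  have hratio : (⨆ (y : X) (_ : dist x y ≤ r), edist (f x) (f y)) /
      (⨅ (y : X) (_ : r ≤ dist x y), edist (f x) (f y)) ≤ H := le_of_lt (hsub hr)
  rw [ENNReal.div_le_iff_le_mul (Or.inr ENNReal.coe_ne_top) (Or.inr (pos_of_gt h).ne')] at hratio
  have hedist : edist (f x) (f y) ≤ H * edist (f x) (f z) :=
    (le_iSup₂ (f := fun q (_ : dist x q ≤ r) => edist (f x) (f q)) y hy).trans <| hratio.trans <|
      mul_le_mul_right (iInf₂_le (f := fun q (_ : r ≤ dist x q) => edist (f x) (f q)) z hz) _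
  simp only [edist_nndist] at hedist
  exact_mod_cast hedist

end Dilatation

section LogTest

/-- The function `max 0 (log s)`, truncated at height `L`. -/
def truncLog (L s : ℝ) : ℝ := min (Real.posLog s) L

lemma continuous_truncLog (L : ℝ) : Continuous (truncLog L) :=
  Real.continuous_posLog.min continuous_const

lemma abs_log_sub_log_le {x y m : ℝ} (hm : 0 < m) (hx : m ≤ x) (hy : m ≤ y) :
    |Real.log x - Real.log y| ≤ |x - y| / m := by
  wlog hxy : y ≤ x generalizing x y
  · rw [abs_sub_comm, abs_sub_comm x]
    exact this hy hx (le_of_not_ge hxy)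
  have hy0 := hm.trans_le hy
  have hx0 := hm.trans_le hx
  rw [abs_of_nonneg (sub_nonneg.2 hxy), abs_of_nonneg (sub_nonneg.2 (Real.log_le_log hy0 hxy)),
    ← Real.log_div hx0.ne' hy0.ne']
  calc Real.log (x / y) ≤ x / y - 1 := Real.log_le_sub_one_of_pos (div_pos hx0 hy0)
    _ = (x - y) / y := (div_sub_one hy0.ne').symm ▸ rfl
    _ ≤ (x - y) / m := by gcongr

lemma abs_truncLog_sub_le {L s t : ℝ} (hs : 0 ≤ s) (ht : 0 ≤ t) (h : |s - t| ≤ 1 / 2) :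
    |truncLog L s - truncLog L t| ≤ 2 * |s - t| / max 1 t := by
  have hmax : |max 1 s - max 1 t| ≤ |s - t| := by
    simpa using abs_max_sub_max_le_max 1 s 1 t
  have ht1 : 1 ≤ max 1 t := le_max_left 1 t
  have hs2 : max 1 t / 2 ≤ max 1 s := by linarith [(abs_le.1 (hmax.trans h)).1]
  calc |truncLog L s - truncLog L t| ≤ |Real.posLog s - Real.posLog t| := by
        simpa [truncLog] using abs_min_sub_min_le_max (Real.posLog s) L (Real.posLog t) L
    _ = |Real.log (max 1 s) - Real.log (max 1 t)| := by
        rw [Real.posLog_eq_log_max_one hs, Real.posLog_eq_log_max_one ht]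
    _ ≤ |max 1 s - max 1 t| / (max 1 t / 2) :=
        abs_log_sub_log_le (by positivity) hs2 (by linarith)
    _ ≤ |s - t| / (max 1 t / 2) := by gcongr
    _ = 2 * |s - t| / max 1 t := by ring

lemma truncLog_of_le_one {L s : ℝ} (hL : 0 ≤ L) (hs0 : 0 ≤ s) (hs : s ≤ 1) : truncLog L s = 0 := by
  rw [truncLog, (Real.posLog_eq_zero_iff s).2 (by rwa [abs_of_nonneg hs0]), min_eq_left hL]

lemma truncLog_of_two_pow_le {n : ℕ} {s : ℝ} (hs : 2 ^ n ≤ s) :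
    truncLog (n * Real.log 2) s = n * Real.log 2 := by
  refine min_eq_right ?_
  rw [← Real.log_pow]
  exact (Real.log_le_log (by positivity) hs).trans (le_max_right _ _)

variable {X Z : Type*} [PseudoMetricSpace Z] {o : Z}

/-- The truncated logarithm of the distance from `F x` to `o`. -/
def logTest (F : X → Z) (o : Z) (n : ℕ) (x : X) : ℝ :=
  truncLog (n * Real.log 2) (dist (F x) o)

lemma continuous_logTest [TopologicalSpace X] {F : X → Z} (hF : Continuous F) (o : Z) (n : ℕ) :
    Continuous (logTest F o n) :=
  (continuous_truncLog _).comp (hF.dist continuous_const)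

lemma abs_logTest_sub_le {F : X → Z} {n : ℕ} {x y : X} (h : dist (F x) (F y) ≤ 1 / 2) :
    |logTest F o n y - logTest F o n x| ≤
      2 * dist (F x) (F y) / max 1 (dist (F x) o) := by
  have hdist : |dist (F y) o - dist (F x) o| ≤ dist (F x) (F y) :=
    (abs_dist_sub_le (F y) (F x) o).trans_eq (dist_comm _ _)
  refine (abs_truncLog_sub_le dist_nonneg dist_nonneg (hdist.trans h)).trans ?_
  gcongr

lemma logTest_eq_of_two_pow_le {F : X → Z} {n : ℕ} {x y : X} (h : dist (F x) (F y) ≤ 1 / 2)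
    (hx : 2 ^ n + 1 / 2 ≤ dist (F x) o) : logTest F o n y = logTest F o n x := by
  have := dist_triangle (F x) (F y) o
  rw [logTest, logTest, truncLog_of_two_pow_le (by linarith), truncLog_of_two_pow_le (by linarith)]

variable [MeasurableSpace Z]

/-- A measure whose density with respect to `m` is comparable to `max 1 (dist · o) ^ (-N)` on the
ball `ball o (2 ^ (n + 2))`; it is written as a sum over dyadic balls. -/
def logMeasure (m : Measure Z) (N : ℕ) (o : Z) (n : ℕ) : Measure Z :=
  ∑ j ∈ Finset.range (n + 3), ENNReal.ofReal (2 ^ j)⁻¹ ^ N • m.restrict (Metric.ball o (2 ^ j))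

variable {m : Measure Z} {N : ℕ} {V : ℝ≥0∞}

lemma logMeasure_univ_le (hm : ∀ r, m (Metric.ball o r) ≤ V * ENNReal.ofReal r ^ N) (n : ℕ) :
    logMeasure m N o n univ ≤ (n + 3 : ℕ) * V := by
  have hterm (j : ℕ) : ENNReal.ofReal (2 ^ j)⁻¹ ^ N * m (Metric.ball o (2 ^ j)) ≤ V := by
    calc _ ≤ ENNReal.ofReal (2 ^ j)⁻¹ ^ N * (V * ENNReal.ofReal (2 ^ j) ^ N) := by
          gcongr; exact hm _
      _ = V * (ENNReal.ofReal (2 ^ j)⁻¹ * ENNReal.ofReal (2 ^ j)) ^ N := by ring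
      _ = V := by
          rw [← ENNReal.ofReal_mul (by positivity), inv_mul_cancel₀ (by positivity)]
          simp
  calc logMeasure m N o n univ
      = ∑ j ∈ Finset.range (n + 3), ENNReal.ofReal (2 ^ j)⁻¹ ^ N * m (Metric.ball o (2 ^ j)) := by
        simp [logMeasure, Measure.finsetSum_apply]
    _ ≤ ∑ _j ∈ Finset.range (n + 3), V := Finset.sum_le_sum fun j _ => hterm j
    _ = (n + 3 : ℕ) * V := by simp

lemma le_logMeasure_ball [OpensMeasurableSpace Z] {n : ℕ} {q : Z} {l : ℝ} (hl : l ≤ 1 / 2)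
    (hq : dist q o < 2 ^ n + 1 / 2) :
    ENNReal.ofReal (4 * max 1 (dist q o))⁻¹ ^ N * m (Metric.ball q l) ≤
      logMeasure m N o n (Metric.ball q l) := by
  set a := max 1 (dist q o)
  have ha : 1 ≤ a := le_max_left _ _
  have hqa : dist q o ≤ a := le_max_right _ _
  have h1 : (1 : ℝ) ≤ 2 ^ n := one_le_pow₀ one_le_two
  obtain ⟨j, hj, hj'⟩ := exists_nat_pow_near (show 1 ≤ 2 * a by linarith) one_lt_two
  have hjn : j < n + 2 := by
    refine (pow_lt_pow_iff_right₀ (one_lt_two (α := ℝ))).1 (hj.trans_lt ?_)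
    rw [pow_add]
    linarith [max_lt (show (1 : ℝ) < 2 ^ n + 1 / 2 by linarith) hq]
  have hsub : Metric.ball q l ⊆ Metric.ball o (2 ^ (j + 1)) :=
    Metric.ball_subset_ball' (by linarith)
  have hcoeff : (4 * a)⁻¹ ≤ (2 ^ (j + 1))⁻¹ := by
    gcongr
    rw [pow_succ]
    linarith
  calc ENNReal.ofReal (4 * a)⁻¹ ^ N * m (Metric.ball q l)
      ≤ ENNReal.ofReal (2 ^ (j + 1))⁻¹ ^ N * m (Metric.ball q l) := by gcongr
    _ = (ENNReal.ofReal (2 ^ (j + 1))⁻¹ ^ N • m.restrict (Metric.ball o (2 ^ (j + 1))))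
          (Metric.ball q l) := by
        rw [Measure.smul_apply, smul_eq_mul,
          Measure.restrict_apply Metric.isOpen_ball.measurableSet,
          inter_eq_self_of_subset_left hsub]
    _ ≤ logMeasure m N o n (Metric.ball q l) := by
        rw [logMeasure, Measure.finsetSum_apply]
        exact Finset.single_le_sum (f := fun j : ℕ => (ENNReal.ofReal (2 ^ j)⁻¹ ^ N •
          m.restrict (Metric.ball o (2 ^ j))) (Metric.ball q l)) (fun _ _ => zero_le)
          (Finset.mem_range.2 (Nat.succ_lt_succ hjn))

variable [PseudoMetricSpace X] [MeasurableSpace X]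

/-- The measure `logMeasure` pulled back by a homeomorphism `F`. -/
def pullbackLogMeasure (F : X ≃ₜ Z) (m : Measure Z) (N : ℕ) (o : Z) (n : ℕ) : Measure X :=
  (logMeasure m N o n).map F.symm

variable [OpensMeasurableSpace Z] [BorelSpace X]

-- Distortion at most `H` makes the image of `ball x r` contain a ball about `F x` of radius
-- comparable to `dist (F x) (F y)`, whose `logMeasure` is comparable to the `N`-th power of the
-- oscillation of the truncated logarithm.
lemma edist_logTest_le (F : X ≃ₜ Z) (hN : N ≠ 0) (hV0 : V ≠ 0) (hVtop : V ≠ ∞)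
    (hm : ∀ z r, V * ENNReal.ofReal r ^ N ≤ m (Metric.ball z r)) {n : ℕ} {H : ℝ≥0} (hH : 1 ≤ H)
    {x y : X} {r : ℝ} (hF : dist (F x) (F y) ≤ 1 / 2)
    (hdist : ∀ z, r ≤ dist x z → dist (F x) (F y) ≤ H * dist (F x) (F z)) :
    edist (logTest F o n y) (logTest F o n x) ≤ 8 * H * V⁻¹ ^ (1 / (N : ℝ)) *
      pullbackLogMeasure F m N o n (Metric.ball x r) ^ (1 / (N : ℝ)) := by
  rcases le_or_gt (2 ^ n + 1 / 2) (dist (F x) o) with hfar | hnear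
  · simp [logTest_eq_of_two_pow_le hF hfar]
  set a := max 1 (dist (F x) o)
  have ha : 1 ≤ a := le_max_left _ _
  have hH0 : (0 : ℝ) < H := by exact_mod_cast hH.trans_lt' one_pos
  set l := dist (F x) (F y) / H
  have hl : l ≤ 1 / 2 := (div_le_self dist_nonneg (by exact_mod_cast hH)).trans hF
  have hsub : Metric.ball (F x) l ⊆ F.symm ⁻¹' Metric.ball x r := by
    intro q hq
    rw [Metric.mem_ball', lt_div_iff₀' hH0] at hq
    rw [mem_preimage, Metric.mem_ball']
    contrapose! hq
    simpa using hdist _ hq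
  have hmass : V * ENNReal.ofReal (l / (4 * a)) ^ N ≤
      pullbackLogMeasure F m N o n (Metric.ball x r) := by
    calc V * ENNReal.ofReal (l / (4 * a)) ^ N
        = ENNReal.ofReal (4 * a)⁻¹ ^ N * (V * ENNReal.ofReal l ^ N) := by
          rw [div_eq_mul_inv, ENNReal.ofReal_mul (by positivity), mul_pow]
          ring
      _ ≤ ENNReal.ofReal (4 * a)⁻¹ ^ N * m (Metric.ball (F x) l) := by gcongr; exact hm _ _
      _ ≤ logMeasure m N o n (Metric.ball (F x) l) := le_logMeasure_ball hl hnear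
      _ ≤ _ := by
        rw [pullbackLogMeasure, Measure.map_apply F.symm.continuous.measurable
          Metric.isOpen_ball.measurableSet]
        exact measure_mono hsub
  calc edist (logTest F o n y) (logTest F o n x)
      ≤ ENNReal.ofReal (2 * dist (F x) (F y) / a) := by
        rw [edist_dist, Real.dist_eq]
        exact ENNReal.ofReal_le_ofReal (abs_logTest_sub_le hF)
    _ = 8 * H * ENNReal.ofReal (l / (4 * a)) := by
        rw [← ENNReal.ofReal_coe_nnreal, ← ENNReal.ofReal_ofNat, ← ENNReal.ofReal_mul (by simp),
          ← ENNReal.ofReal_mul (by positivity)]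
        congr 1
        simp only [l]
        field_simp
        ring
    _ = 8 * H * (V⁻¹ * (V * ENNReal.ofReal (l / (4 * a)) ^ N)) ^ (1 / (N : ℝ)) := by
        rw [ENNReal.inv_mul_cancel_left hV0 hVtop, one_div, ENNReal.pow_rpow_inv_natCast hN]
    _ ≤ 8 * H * (V⁻¹ * pullbackLogMeasure F m N o n (Metric.ball x r)) ^ (1 / (N : ℝ)) := by
        gcongr
    _ = _ := by rw [ENNReal.mul_rpow_of_nonneg _ _ (by positivity), ← mul_assoc]

lemma exists_mem_oscSet_logTest (F : X ≃ₜ Z) (hN : N ≠ 0) (hV0 : V ≠ 0) (hVtop : V ≠ ∞)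
    (hm : ∀ z r, V * ENNReal.ofReal r ^ N ≤ m (Metric.ball z r)) (n : ℕ) {H : ℝ≥0} (hH : 1 ≤ H)
    {x : X} (hx : dilatation F x < H) :
    ∃ δ > 0, x ∈ oscSet (logTest F o n) (pullbackLogMeasure F m N o n) N
      (8 * H * V⁻¹ ^ (1 / (N : ℝ))) δ := by
  obtain ⟨δ₁, hδ₁, hdist⟩ := exists_forall_dist_le_of_dilatation_lt hx
  obtain ⟨δ₂, hδ₂, hosc⟩ := Metric.continuous_iff'.1 F.continuous x (1 / 2) (by norm_num)
    |> Metric.eventually_nhds_iff_ball.1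
  refine ⟨min δ₁ (δ₂ / 2), by positivity, fun r hr y hy => ?_⟩
  refine edist_logTest_le F hN hV0 hVtop hm hH ?_ fun z hz => ?_
  · rw [dist_comm]
    refine (hosc y ?_).le
    rw [Metric.mem_ball']
    linarith [hr.2.trans (min_le_right _ _)]
  · exact hdist r ⟨hr.1, hr.2.trans (min_le_left _ _)⟩ y z hy hz

end LogTest

section Translation

open ProbabilityTheory

variable {G E : Type*} [NormedGroup G] [IsTopologicalGroup G] [MeasurableSpace G] [BorelSpace G]
  [PseudoEMetricSpace E] {μ : Measure G} {u : G → E}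

lemma setLIntegral_ball_mul_right_le [μ.IsMulRightInvariant] (F : G → ℝ≥0∞) (x h : G) (t : ℝ) :
    ∫⁻ p in Metric.ball x t, F (p * h) ∂μ ≤ ∫⁻ p in Metric.ball x (t + ‖h‖), F p ∂μ := by
  rw [← lintegral_indicator Metric.isOpen_ball.measurableSet,
    ← lintegral_indicator Metric.isOpen_ball.measurableSet,
    ← lintegral_mul_right_eq_self ((Metric.ball x (t + ‖h‖)).indicator F) h]
  refine lintegral_mono <| indicator_le fun p hp => ?_
  have hmem : p * h ∈ Metric.ball x (t + ‖h‖) := by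
    rw [Metric.mem_ball'] at hp ⊢
    linarith [dist_triangle x p (p * h), dist_self_mul_right h p]
  exact (indicator_of_mem hmem F).ge

lemma setLIntegral_edist_mul_prod_le [μ.IsMulRightInvariant] (hu : Continuous u) {x : G}
    {ρ R : ℝ} {Q : ℝ≥0∞} (l : List G) {r : ℝ} (hr : r + l.length * ρ ≤ R) (hρ : ∀ h ∈ l, ‖h‖ ≤ ρ)
    (hQ : ∀ h ∈ l, ∫⁻ p in Metric.ball x R, edist (u (p * h)) (u p) ∂μ ≤ Q) :
    ∫⁻ p in Metric.ball x r, edist (u (p * l.prod)) (u p) ∂μ ≤ l.length * Q := by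
  induction l generalizing r with
  | nil => simp
  | cons h l ih =>
    simp only [List.forall_mem_cons] at hρ hQ
    simp only [List.length_cons, Nat.cast_add, Nat.cast_one, List.prod_cons] at hr ⊢
    have hρ0 : 0 ≤ ρ := (norm_nonneg' h).trans hρ.1
    have hrR : r ≤ R := (le_add_of_nonneg_right (by positivity)).trans hr
    have hmeas : Measurable fun p => edist (u (p * h)) (u p) := by
      exact ((hu.comp (continuous_mul_const h)).edist hu).measurable
    calc ∫⁻ p in Metric.ball x r, edist (u (p * (h * l.prod))) (u p) ∂μ
        ≤ ∫⁻ p in Metric.ball x r, (edist (u (p * h)) (u p) +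
            edist (u (p * h * l.prod)) (u (p * h))) ∂μ := by
          refine lintegral_mono fun p => ?_
          rw [← mul_assoc, add_comm]
          exact edist_triangle _ _ _
      _ = ∫⁻ p in Metric.ball x r, edist (u (p * h)) (u p) ∂μ +
            ∫⁻ p in Metric.ball x r, edist (u (p * h * l.prod)) (u (p * h)) ∂μ :=
          lintegral_add_left hmeas _
      _ ≤ Q + l.length * Q := by
          refine add_le_add ((lintegral_mono_set (Metric.ball_subset_ball hrR)).trans hQ.1) ?_
          refine (setLIntegral_ball_mul_right_le
            (fun p => edist (u (p * l.prod)) (u p)) x h r).trans (ih ?_ hρ.2 hQ.2)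
          linarith [hρ.1]
      _ = (l.length + 1) * Q := by ring

variable [SecondCountableTopology G]

lemma setLIntegral_setLIntegral_ball_edist_le [μ.IsMulLeftInvariant] [SFinite μ]
    (hu : Continuous u) {x : G} {r : ℝ} {Q : ℝ≥0∞} (hQ : ∀ v, ‖v‖ < 2 * r →
      ∫⁻ p in Metric.ball x r, edist (u (p * v)) (u p) ∂μ ≤ Q) :
    ∫⁻ y in Metric.ball x r, ∫⁻ z in Metric.ball x r, edist (u y) (u z) ∂μ ∂μ ≤
      Q * μ (Metric.ball 1 (2 * r)) := by
  have hmeas : Measurable fun z : G × G => edist (u (z.1 * z.2)) (u z.1) :=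
    ((hu.comp continuous_mul).edist (hu.comp continuous_fst)).measurable
  calc _ ≤ ∫⁻ y in Metric.ball x r, ∫⁻ v in Metric.ball 1 (2 * r),
          edist (u (y * v)) (u y) ∂μ ∂μ := by
        refine setLIntegral_mono' Metric.isOpen_ball.measurableSet fun y hy => ?_
        rw [← lintegral_indicator Metric.isOpen_ball.measurableSet,
          ← lintegral_indicator Metric.isOpen_ball.measurableSet, ← lintegral_mul_left_eq_self _ y]
        refine lintegral_mono fun v => ?_
        by_cases hv : y * v ∈ Metric.ball x r
        · have hv' : v ∈ Metric.ball 1 (2 * r) := by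
            rw [Metric.mem_ball'] at hv
            rw [mem_ball_one_iff, ← dist_self_mul_right v y]
            linarith [dist_triangle y x (y * v), Metric.mem_ball.1 hy]
          rw [indicator_of_mem hv, indicator_of_mem hv', edist_comm]
        · rw [indicator_of_notMem hv]
          exact zero_le
    _ = ∫⁻ v in Metric.ball 1 (2 * r), ∫⁻ y in Metric.ball x r, edist (u (y * v)) (u y) ∂μ ∂μ :=
        lintegral_lintegral_swap hmeas.aemeasurable
    _ ≤ ∫⁻ _ in Metric.ball 1 (2 * r), Q ∂μ := by
        refine setLIntegral_mono' Metric.isOpen_ball.measurableSet fun v hv => hQ v ?_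
        rwa [← mem_ball_one_iff]
    _ = Q * μ (Metric.ball 1 (2 * r)) := setLIntegral_const _ _

end Translation

section Energy

variable {X : Type*} [PseudoMetricSpace X] [MeasurableSpace X] [OpensMeasurableSpace X]
  [SecondCountableTopology X] {μ ν : Measure X} [SFinite μ] [SFinite ν] {p q : ℝ} {V : ℝ≥0∞}

lemma setLIntegral_measure_ball_le {ε : ℝ} {C : ℝ≥0∞} (hC : ∀ x, μ (Metric.ball x ε) ≤ C)
    (A : Set X) : ∫⁻ x in A, ν (Metric.ball x ε) ∂μ ≤ C * ν (Metric.thickening ε A) := by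
  have hD : MeasurableSet {z : X × X | dist z.2 z.1 < ε} :=
    measurableSet_lt (measurable_snd.dist measurable_fst) measurable_const
  have hfst : ∀ x, Prod.mk x ⁻¹' {z : X × X | dist z.2 z.1 < ε} = Metric.ball x ε := fun _ => rfl
  have hsnd : ∀ y, (fun x => (x, y)) ⁻¹' {z : X × X | dist z.2 z.1 < ε} = Metric.ball y ε :=
    fun y => by ext x; simp [dist_comm]
  calc ∫⁻ x in A, ν (Metric.ball x ε) ∂μ
      = ∫⁻ y, μ.restrict A (Metric.ball y ε) ∂ν := by
        have h := (Measure.prod_apply (μ := μ.restrict A) (ν := ν) hD).symm.trans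
          (Measure.prod_apply_symm hD)
        simpa only [hfst, hsnd] using h
    _ ≤ ∫⁻ y, (Metric.thickening ε A).indicator (fun _ => C) y ∂ν := by
        refine lintegral_mono fun y => ?_
        rw [Measure.restrict_apply Metric.isOpen_ball.measurableSet]
        by_cases hy : y ∈ Metric.thickening ε A
        · rw [indicator_of_mem hy]
          exact (measure_mono inter_subset_left).trans (hC y)
        · have hempty : Metric.ball y ε ∩ A = ∅ := by
            refine eq_empty_of_forall_notMem fun x hx => hy ?_
            exact Metric.mem_thickening_iff.2 ⟨x, hx.2, Metric.mem_ball'.1 hx.1⟩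
          rw [hempty, measure_empty]
          exact zero_le
    _ = C * ν (Metric.thickening ε A) :=
        lintegral_indicator_const Metric.isOpen_thickening.measurableSet C

lemma setLIntegral_discGrad_rpow_le (hp : 0 < p)
    (hμ : ∀ x r, μ (Metric.ball x r) ≤ V * ENNReal.ofReal r ^ p) {ε : ℝ} (hε : 0 < ε) (A : Set X) :
    ∫⁻ x in A, discGrad ν p ε x ^ p ∂μ ≤ 2 ^ p * V * ν (Metric.thickening (2 * ε) A) := by
  have hε0 : ENNReal.ofReal ε ≠ 0 := by simpa using hε
  have hscale : (ENNReal.ofReal ε)⁻¹ ^ p * (V * ENNReal.ofReal (2 * ε) ^ p) = 2 ^ p * V := by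
    rw [mul_left_comm, ← ENNReal.mul_rpow_of_nonneg _ _ hp.le, ENNReal.ofReal_mul zero_le_two,
      mul_left_comm, ENNReal.inv_mul_cancel hε0 ENNReal.ofReal_ne_top, mul_one,
      ENNReal.ofReal_ofNat, mul_comm]
  calc ∫⁻ x in A, discGrad ν p ε x ^ p ∂μ
      = (ENNReal.ofReal ε)⁻¹ ^ p * ∫⁻ x in A, ν (Metric.ball x (2 * ε)) ∂μ := by
        rw [← lintegral_const_mul' _ _ (ENNReal.rpow_ne_top_of_nonneg hp.le (by simpa using hε))]
        simp only [discGrad, ENNReal.mul_rpow_of_nonneg _ _ hp.le, ← ENNReal.rpow_mul,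
          one_div_mul_cancel hp.ne', ENNReal.rpow_one]
    _ ≤ (ENNReal.ofReal ε)⁻¹ ^ p *
          (V * ENNReal.ofReal (2 * ε) ^ p * ν (Metric.thickening (2 * ε) A)) := by
        gcongr
        exact setLIntegral_measure_ball_le (fun x => hμ x _) A
    _ = 2 ^ p * V * ν (Metric.thickening (2 * ε) A) := by rw [← mul_assoc, hscale]

lemma ofReal_mul_setLIntegral_ball_discGrad_le (hpq : p.HolderConjugate q)
    (hμ : ∀ x r, μ (Metric.ball x r) = V * ENNReal.ofReal r ^ p) {ε : ℝ} (hε : 0 < ε) (x : X)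
    (R : ℝ) : ENNReal.ofReal R * ∫⁻ y in Metric.ball x R, discGrad ν p ε y ∂μ ≤
      2 * μ (Metric.ball x R) * ν (Metric.ball x (R + 2 * ε)) ^ (1 / p) := by
  have hp := hpq.pos
  have hp' : 0 ≤ 1 / p := by positivity
  have hR : ENNReal.ofReal R * V ^ (1 / p) = μ (Metric.ball x R) ^ (1 / p) := by
    rw [hμ, ENNReal.mul_rpow_of_nonneg _ _ hp', ← ENNReal.rpow_mul, mul_one_div_cancel hp.ne',
      ENNReal.rpow_one, mul_comm]
  have hthick : Metric.thickening (2 * ε) (Metric.ball x R) ⊆ Metric.ball x (R + 2 * ε) :=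
    fun y hy => by
    obtain ⟨z, hz, hyz⟩ := Metric.mem_thickening_iff.1 hy
    rw [Metric.mem_ball] at hz ⊢
    linarith [dist_triangle y z x]
  calc _ ≤ ENNReal.ofReal R * ((∫⁻ y in Metric.ball x R, discGrad ν p ε y ^ p ∂μ) ^ (1 / p) *
          μ (Metric.ball x R) ^ (1 / q)) := by
        gcongr
        simpa using lintegral_le_rpow_lintegral_mul_rpow_measure_univ hpq
          (μ.restrict (Metric.ball x R)) (measurable_discGrad ν p ε).aemeasurable
    _ ≤ ENNReal.ofReal R * ((2 ^ p * V * ν (Metric.ball x (R + 2 * ε))) ^ (1 / p) *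
          μ (Metric.ball x R) ^ (1 / q)) := by
        gcongr
        exact (setLIntegral_discGrad_rpow_le hp (fun x r => (hμ x r).le) hε _).trans (by gcongr)
    _ = 2 * (μ (Metric.ball x R) ^ (1 / p) * μ (Metric.ball x R) ^ (1 / q)) *
          ν (Metric.ball x (R + 2 * ε)) ^ (1 / p) := by
        rw [ENNReal.mul_rpow_of_nonneg _ _ hp', ENNReal.mul_rpow_of_nonneg _ _ hp',
          ← ENNReal.rpow_mul, mul_one_div_cancel hp.ne', ENNReal.rpow_one, ← hR]
        ring
    _ = _ := by
        rw [← ENNReal.rpow_add_of_nonneg _ _ hp' (one_div_nonneg.2 hpq.symm.nonneg),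
          hpq.one_div_add_one_div, div_one, ENNReal.rpow_one]

/-- `ν` serves as a `p`-energy of the continuous function `u`, with constant `D` at `μ`-almost every
point. At the remaining points some other finite constant is allowed; it does not enter the
estimates. -/
structure IsEnergyOf (μ ν : Measure X) (u : X → ℝ) (p : ℝ) (D : ℝ≥0∞) : Prop where
  continuous : Continuous u
  exists_mem_oscSet : ∃ M ≠ ∞, ∀ x, ∃ δ > 0, x ∈ oscSet u ν p M δ
  ae_mem_oscSet : ∀ᵐ x ∂μ, ∃ δ > 0, x ∈ oscSet u ν p D δ

end Energy

section GroupPoincare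

open ProbabilityTheory

variable {G : Type*} [NormedGroup G] {γ : ℝ → G}

lemma lipschitzWith_const_mul (hγ : LipschitzWith 1 γ) (x : G) :
    LipschitzWith 1 fun t => x * γ t :=
  LipschitzWith.of_dist_le_mul fun s t => by simpa using hγ.dist_le_mul s t

lemma norm_le_abs_of_lipschitzWith (hγ : LipschitzWith 1 γ) (hγ0 : γ 0 = 1) (t : ℝ) :
    ‖γ t‖ ≤ |t| := by
  simpa [hγ0] using hγ.dist_le_mul t 0

variable [IsTopologicalGroup G] [MeasurableSpace G] [BorelSpace G]

lemma measurable_comp_mul_curve {F : G → ℝ≥0∞} (hF : Measurable F) (hγ : Continuous γ) :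
    Measurable fun z : G × ℝ => F (z.1 * γ z.2) :=
  hF.comp (continuous_fst.mul (hγ.comp continuous_snd)).measurable

variable {μ ν : Measure G} [SFinite μ] {p q : ℝ} {V D : ℝ≥0∞} {u : G → ℝ}

lemma setLIntegral_liminf_lintegral_mul_curve_le {W : Set ℝ} {F : ℕ → G → ℝ≥0∞}
    (hF : ∀ k, Measurable (F k)) (hγ : Continuous γ) {A : Set G} {B : ℕ → ℝ≥0∞}
    (hB : ∀ k, ∀ t ∈ W, ∫⁻ x in A, F k (x * γ t) ∂μ ≤ B k) (hW : MeasurableSet W)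
    (hWfin : volume W ≠ ∞) :
    ∫⁻ x in A, liminf (fun k => ∫⁻ t in W, F k (x * γ t)) atTop ∂μ ≤
      liminf B atTop * volume W := by
  rw [mul_comm, ← ENNReal.liminf_const_mul_of_ne_top hWfin]
  refine (lintegral_liminf_le fun k =>
    (measurable_comp_mul_curve (hF k) hγ).lintegral_prod_right').trans
    (liminf_le_liminf (Eventually.of_forall fun k => ?_))
  calc ∫⁻ x in A, (∫⁻ t in W, F k (x * γ t)) ∂μ
      = ∫⁻ t in W, ∫⁻ x in A, F k (x * γ t) ∂μ :=
        lintegral_lintegral_swap (f := fun x t => F k (x * γ t))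
          (measurable_comp_mul_curve (hF k) hγ).aemeasurable
    _ ≤ ∫⁻ _ in W, B k := setLIntegral_mono' hW (hB k)
    _ = volume W * B k := by rw [setLIntegral_const, mul_comm]

variable [SecondCountableTopology G]

lemma ae_ae_mul_curve [μ.IsMulRightInvariant] {P : G → Prop} (hP : ∀ᵐ x ∂μ, P x)
    (hγ : Continuous γ) : ∀ᵐ x ∂μ, ∀ᵐ t, P (x * γ t) := by
  set Z := toMeasurable μ {x | ¬ P x}
  have hZ : μ Z = 0 := (measure_toMeasurable _).trans hP
  have hmeas : MeasurableSet {z : ℝ × G | z.2 * γ z.1 ∉ Z} :=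
    (continuous_snd.mul (hγ.comp continuous_fst)).measurable
      (measurableSet_toMeasurable _ _).compl
  have hswap : ∀ᵐ t, ∀ᵐ x ∂μ, x * γ t ∉ Z := ae_of_all _ fun t =>
    (measurePreserving_mul_right μ (γ t)).quasiMeasurePreserving.ae
      (measure_eq_zero_iff_ae_notMem.1 hZ)
  rw [Measure.ae_ae_comm hmeas] at hswap
  filter_upwards [hswap] with x hx
  filter_upwards [hx] with t ht
  exact not_not.1 fun hPt => ht (subset_toMeasurable _ _ hPt)

lemma IsEnergyOf.ae_edist_mul_curve_le [μ.IsMulRightInvariant] [IsFiniteMeasure ν]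
    (h : IsEnergyOf μ ν u p D) (hD : D ≠ ∞) (hpq : p.HolderConjugate q) (hV : V ≠ ∞)
    (hμ : ∀ x r, μ (Metric.ball x r) = V * ENNReal.ofReal r ^ p) (hγ : LipschitzWith 1 γ)
    (hγ0 : γ 0 = 1) {δ : ℕ → ℝ} (hδ : Antitone δ) (hδ0 : ∀ k, 0 < δ k)
    (hδlim : Tendsto δ atTop (𝓝 0)) {r S : ℝ} (hr : 0 < r) (hS : S ∈ Icc 0 (2 * r)) :
    ∀ᵐ x ∂μ, edist (u (x * γ S)) (u x) ≤
      2 * D * liminf (fun k => ∫⁻ t in Ioo (-r) (3 * r), discGrad ν p (δ k) (x * γ t)) atTop := by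
  have hmeas (k : ℕ) : Measurable fun x => discGrad ν p (δ k) x ^ p :=
    (measurable_discGrad ν p (δ k)).pow_const p
  have henergy : ∀ k, ∀ t ∈ Ioo (-r) (3 * r),
      ∫⁻ x in univ, discGrad ν p (δ k) (x * γ t) ^ p ∂μ ≤ 2 ^ p * V * ν univ := fun k t _ => by
    rw [setLIntegral_univ, lintegral_mul_right_eq_self (fun x => discGrad ν p (δ k) x ^ p),
      ← setLIntegral_univ]
    refine (setLIntegral_discGrad_rpow_le hpq.pos (fun x r => (hμ x r).le) (hδ0 k) _).trans ?_
    gcongr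
    exact subset_univ _
  have hfin : ∀ᵐ x ∂μ, liminf (fun k => ∫⁻ t in Ioo (-r) (3 * r),
      discGrad ν p (δ k) (x * γ t) ^ p) atTop < ∞ := by
    refine ae_lt_top (.liminf fun k =>
      (measurable_comp_mul_curve (hmeas k) hγ.continuous).lintegral_prod_right') (ne_of_lt ?_)
    rw [← setLIntegral_univ]
    refine (setLIntegral_liminf_lintegral_mul_curve_le hmeas hγ.continuous henergy
      measurableSet_Ioo measure_Ioo_lt_top.ne).trans_lt ?_
    rw [liminf_const]
    exact ENNReal.mul_lt_top (ENNReal.mul_lt_top (ENNReal.mul_lt_top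
      (ENNReal.rpow_lt_top_of_nonneg hpq.nonneg ENNReal.ofNat_ne_top) hV.lt_top)
      (measure_lt_top ν univ)) measure_Ioo_lt_top
  obtain ⟨M, hM, hall⟩ := h.exists_mem_oscSet
  filter_upwards [hfin, ae_ae_mul_curve h.ae_mem_oscSet hγ.continuous] with x hx hae
  have hsub : uIcc S 0 ⊆ Ioo (-r) (3 * r) := by
    rw [uIcc_of_ge hS.1]
    exact Icc_subset_Ioo (by linarith) (by linarith [hS.2])
  simpa [hγ0] using edist_le_liminf_lintegral_discGrad hpq (lipschitzWith_const_mul hγ x)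
    (h.continuous.comp (lipschitzWith_const_mul hγ x).continuous) hM hD (fun t => hall _)
    hae hδ hδ0 hδlim isOpen_Ioo hx hsub

lemma IsEnergyOf.setLIntegral_edist_mul_curve_le [μ.IsMulRightInvariant] [IsFiniteMeasure ν]
    (h : IsEnergyOf μ ν u p D) (hD : D ≠ ∞) (hpq : p.HolderConjugate q) (hV : V ≠ ∞)
    (hμ : ∀ x r, μ (Metric.ball x r) = V * ENNReal.ofReal r ^ p) (hγ : LipschitzWith 1 γ)
    (hγ0 : γ 0 = 1) {r s S R : ℝ} (hr : 0 < r) (hS : S ∈ Icc 0 (2 * r)) (hR : 4 * r ≤ R)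
    (hsR : s + 3 * r ≤ R) (x : G) :
    ∫⁻ y in Metric.ball x s, edist (u (y * γ S)) (u y) ∂μ ≤
      4 * D * μ (Metric.ball x R) * ν (Metric.ball x (R + r)) ^ (1 / p) := by
  obtain ⟨δ, hδ, hδr, hδlim⟩ := exists_seq_strictAnti_tendsto' (half_pos hr)
  have hγr : ∀ t ∈ Ioo (-r) (3 * r), ‖γ t‖ ≤ 3 * r := fun t ht =>
    (norm_le_abs_of_lipschitzWith hγ hγ0 t).trans (abs_le.2 ⟨by linarith [ht.1], ht.2.le⟩)
  have htranslate : ∀ k, ∀ t ∈ Ioo (-r) (3 * r), ∫⁻ y in Metric.ball x s,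
      discGrad ν p (δ k) (y * γ t) ∂μ ≤ ∫⁻ y in Metric.ball x R, discGrad ν p (δ k) y ∂μ :=
    fun k t ht => (setLIntegral_ball_mul_right_le _ x (γ t) s).trans
      (lintegral_mono_set (Metric.ball_subset_ball (by linarith [hγr t ht])))
  have hlength : volume (Ioo (-r) (3 * r)) ≤ ENNReal.ofReal R := by
    rw [Real.volume_Ioo]
    exact ENNReal.ofReal_le_ofReal (by linarith)
  have hHolder (k : ℕ) : ENNReal.ofReal R * ∫⁻ y in Metric.ball x R, discGrad ν p (δ k) y ∂μ ≤
      2 * μ (Metric.ball x R) * ν (Metric.ball x (R + r)) ^ (1 / p) := by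
    refine (ofReal_mul_setLIntegral_ball_discGrad_le hpq hμ (hδr k).1 x R).trans ?_
    gcongr
    · exact one_div_nonneg.2 hpq.nonneg
    · linarith [(hδr k).2]
  calc ∫⁻ y in Metric.ball x s, edist (u (y * γ S)) (u y) ∂μ
      ≤ ∫⁻ y in Metric.ball x s, 2 * D * liminf (fun k =>
          ∫⁻ t in Ioo (-r) (3 * r), discGrad ν p (δ k) (y * γ t)) atTop ∂μ :=
        lintegral_mono_ae (ae_restrict_of_ae (h.ae_edist_mul_curve_le hD hpq hV hμ hγ hγ0
          hδ.antitone (fun k => (hδr k).1) hδlim hr hS))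
    _ ≤ 2 * D * (liminf (fun k => ∫⁻ y in Metric.ball x R, discGrad ν p (δ k) y ∂μ) atTop *
          volume (Ioo (-r) (3 * r))) := by
        rw [lintegral_const_mul' _ _ (ENNReal.mul_ne_top ENNReal.ofNat_ne_top hD)]
        gcongr
        exact setLIntegral_liminf_lintegral_mul_curve_le (fun k => measurable_discGrad ν p (δ k))
          hγ.continuous htranslate measurableSet_Ioo measure_Ioo_lt_top.ne
    _ ≤ 2 * D * (2 * μ (Metric.ball x R) * ν (Metric.ball x (R + r)) ^ (1 / p)) := by
        gcongr 2 * D * ?_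
        rw [mul_comm]
        refine (mul_le_mul_left hlength _).trans ?_
        rw [← ENNReal.liminf_const_mul_of_ne_top ENNReal.ofReal_ne_top]
        exact liminf_le_of_frequently_le' (Frequently.of_forall hHolder)
    _ = 4 * D * μ (Metric.ball x R) * ν (Metric.ball x (R + r)) ^ (1 / p) := by ring

/-- Every element of `G` is a product of `m` elements, each of which is reached from `1` by a curve
of unit speed within the time allowed by the norm of the given element. -/
def HasCurveFactorization (G : Type*) [NormedGroup G] (m : ℕ) : Prop :=
  ∀ v : G, ∃ l : List G, l.length = m ∧ l.prod = v ∧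
    ∀ h ∈ l, ∃ γ : ℝ → G, LipschitzWith 1 γ ∧ γ 0 = 1 ∧ ∃ S ∈ Icc 0 ‖v‖, γ S = h

lemma IsEnergyOf.setLIntegral_edist_mul_le [μ.IsMulRightInvariant] [IsFiniteMeasure ν]
    (h : IsEnergyOf μ ν u p D) (hD : D ≠ ∞) (hpq : p.HolderConjugate q) (hV : V ≠ ∞)
    (hμ : ∀ x r, μ (Metric.ball x r) = V * ENNReal.ofReal r ^ p) {m : ℕ}
    (hG : HasCurveFactorization G m) {r : ℝ} (hr : 0 < r) (x : G) {v : G} (hv : ‖v‖ ≤ 2 * r) :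
    ∫⁻ y in Metric.ball x r, edist (u (y * v)) (u y) ∂μ ≤
      m * (4 * D * μ (Metric.ball x ((2 * m + 4) * r)) *
        ν (Metric.ball x ((2 * m + 5) * r)) ^ (1 / p)) := by
  obtain ⟨l, rfl, rfl, hl⟩ := hG v
  have hlr : 0 ≤ l.length * r := by positivity
  refine setLIntegral_edist_mul_prod_le h.continuous (ρ := 2 * r) l le_rfl
    (fun g hg => ?_) fun g hg => ?_ <;> obtain ⟨γ, hγ, hγ0, S, hS, rfl⟩ := hl g hg
  · have hγS := norm_le_abs_of_lipschitzWith hγ hγ0 S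
    rw [abs_of_nonneg hS.1] at hγS
    exact hγS.trans (hS.2.trans hv)
  · have hR : (2 * l.length + 5) * r = (2 * l.length + 4) * r + r := by ring
    rw [hR]
    exact h.setLIntegral_edist_mul_curve_le hD hpq hV hμ hγ hγ0 hr ⟨hS.1, hS.2.trans hv⟩
      (by linarith) (by linarith) x

theorem IsEnergyOf.poincareIneq [μ.IsMulLeftInvariant] [μ.IsMulRightInvariant]
    [IsFiniteMeasure ν] (h : IsEnergyOf μ ν u p D) (hD : D ≠ ∞) (hpq : p.HolderConjugate q)
    (hV0 : V ≠ 0) (hV : V ≠ ∞) (hμ : ∀ x r, μ (Metric.ball x r) = V * ENNReal.ofReal r ^ p) {m : ℕ}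
    (hG : HasCurveFactorization G m) :
    PoincareIneq μ ν u (4 * m * ENNReal.ofReal (8 * m + 16) ^ p * D) (2 * m + 5) p := by
  intro x x' r hr hsub
  have hscale {a s : ℝ} (ha : 0 ≤ a) (y z : G) : μ (Metric.ball y (a * s)) =
      ENNReal.ofReal a ^ p * μ (Metric.ball z s) := by
    rw [hμ, hμ, ENNReal.ofReal_mul ha, ENNReal.mul_rpow_of_nonneg _ _ hpq.nonneg, mul_left_comm]
  have hcancel (y : G) {s : ℝ} (hs : 0 < s) :
      (μ (Metric.ball y s))⁻¹ * μ (Metric.ball y s) = 1 := by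
    rw [hμ]
    exact ENNReal.inv_mul_cancel (mul_ne_zero hV0 (by simp [hs, hpq.nonneg.not_gt]))
      (ENNReal.mul_ne_top hV (ENNReal.rpow_ne_top_of_nonneg hpq.nonneg ENNReal.ofReal_ne_top))
  have hconst : ENNReal.ofReal (2 * m + 4) ^ p * ENNReal.ofReal 4 ^ p =
      ENNReal.ofReal (8 * m + 16) ^ p := by
    rw [← ENNReal.mul_rpow_of_nonneg _ _ hpq.nonneg, ← ENNReal.ofReal_mul (by positivity)]
    ring_nf
  set N := ν (Metric.ball x ((2 * m + 5) * r)) ^ (1 / p)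
  set B := μ (Metric.ball x r) with hB
  set B' := μ (Metric.ball x' (r / 2)) with hB'
  calc _ = B⁻¹ * (B'⁻¹ * ∫⁻ y in Metric.ball x' (r / 2), ∫⁻ z in Metric.ball x r,
          edist (u y) (u z) ∂μ ∂μ) := meanEDist_cond_cond h.continuous μ _ _
    _ ≤ B⁻¹ * (B'⁻¹ * (m * (4 * D * μ (Metric.ball x ((2 * m + 4) * r)) * N) *
          μ (Metric.ball 1 (2 * r)))) := by
        gcongr
        exact (lintegral_mono_set hsub).trans
          (setLIntegral_setLIntegral_ball_edist_le h.continuous fun v hv =>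
            h.setLIntegral_edist_mul_le hD hpq hV hμ hG hr x hv.le)
    _ = (B⁻¹ * B) * (B'⁻¹ * B') * (4 * m * (ENNReal.ofReal (2 * m + 4) ^ p *
          ENNReal.ofReal 4 ^ p) * D * N) := by
        have h4 : 2 * r = 4 * (r / 2) := by ring
        rw [hscale (by positivity) x x, h4, hscale zero_le_four 1 x']
        ring
    _ = 4 * m * ENNReal.ofReal (8 * m + 16) ^ p * D * N := by
        rw [hB, hB', hcancel x hr, hcancel x' (half_pos hr), hconst, one_mul, one_mul]

end GroupPoincare

section LogEnergy

variable {N : ℕ} {W : ℝ≥0∞}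

/-- The constant with which the pulled back logarithmic measure is an `N`-energy of the truncated
logarithm, for a homeomorphism with dilatation at most `H` and target balls of measure at least
`W * r ^ N`. -/
def distortionConst (N : ℕ) (W : ℝ≥0∞) (H : ℝ≥0) : ℝ≥0∞ :=
  8 * (H + 1 : ℝ≥0) * W⁻¹ ^ (1 / (N : ℝ))

lemma distortionConst_ne_top (N : ℕ) (hW : W ≠ 0) (H : ℝ≥0) : distortionConst N W H ≠ ∞ :=
  ENNReal.mul_ne_top (ENNReal.mul_ne_top (by norm_num) ENNReal.coe_ne_top)
    (ENNReal.rpow_ne_top_of_nonneg (by positivity) (ENNReal.inv_ne_top.2 hW))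

lemma isEnergyOf_logTest {X Z : Type*} [PseudoMetricSpace X] [MeasurableSpace X] [BorelSpace X]
    [PseudoMetricSpace Z] [MeasurableSpace Z] [OpensMeasurableSpace Z] {μ : Measure X}
    {m : Measure Z} {o : Z} (F : X ≃ₜ Z) (hN : N ≠ 0) (hW0 : W ≠ 0) (hW : W ≠ ∞)
    (hm : ∀ z r, W * ENNReal.ofReal r ^ N ≤ m (Metric.ball z r)) (n : ℕ) {M H : ℝ≥0}
    (hM : ∀ x, dilatation F x ≤ M) (hH : ∀ᵐ x ∂μ, dilatation F x ≤ H) :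
    IsEnergyOf μ (pullbackLogMeasure F m N o n) (logTest F o n) N (distortionConst N W H) := by
  have key {A : ℝ≥0} {x : X} (hx : dilatation F x ≤ A) :
      ∃ δ > 0, x ∈ oscSet (logTest F o n) (pullbackLogMeasure F m N o n) N
        (distortionConst N W A) δ :=
    exists_mem_oscSet_logTest F hN hW0 hW hm n le_add_self
      (hx.trans_lt (by exact_mod_cast lt_add_one A))
  exact ⟨continuous_logTest F.continuous o n,
    ⟨_, distortionConst_ne_top N hW0 M, fun x => key (hM x)⟩, hH.mono fun _ => key⟩

end LogEnergy

section Growth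

variable {G Z : Type*} [NormedGroup G] [IsTopologicalGroup G] [SecondCountableTopology G]
  [ProperSpace G] [MeasurableSpace G] [BorelSpace G] [PseudoMetricSpace Z] [MeasurableSpace Z]
  [OpensMeasurableSpace Z] {μ : Measure G} [μ.IsMulLeftInvariant] [μ.IsMulRightInvariant]
  [μ.IsOpenPosMeasure] [IsFiniteMeasureOnCompacts μ] {m : Measure Z} {o : Z} {N k : ℕ}
  {V W : ℝ≥0∞}

/-- The factor of `(n + 3) ^ (1 / N)` in the upper bound for `n * log 2` when a homeomorphism with
dilatation at most `H` maps points of the ball of radius `R` to distance `2 ^ n`. -/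
def growthConst (N k : ℕ) (W : ℝ≥0∞) (H : ℝ≥0) (R : ℝ) : ℝ≥0∞ :=
  4 * k * ENNReal.ofReal (8 * k + 16) ^ (N : ℝ) * distortionConst N W H *
    (chainConst (2 * k + 5) N (R + 1) * W ^ (1 / (N : ℝ)))

lemma growthConst_ne_top (hN : N ≠ 0) (k : ℕ) (hW0 : W ≠ 0) (hW : W ≠ ∞) (H : ℝ≥0) (R : ℝ) :
    growthConst N k W H R ≠ ∞ := by
  have hchain := chainConst_ne_top (2 * k + 5) (R + 1) (Nat.cast_pos.2 (Nat.pos_of_ne_zero hN))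
  have hdistortion := distortionConst_ne_top N hW0 H
  unfold growthConst
  finiteness

theorem ofReal_mul_log_two_le_of_dilatation_le (F : G ≃ₜ Z) (hN : 1 < N) (hV0 : V ≠ 0) (hV : V ≠ ∞)
    (hμ : ∀ x r, μ (Metric.ball x r) = V * ENNReal.ofReal r ^ N) (hG : HasCurveFactorization G k)
    (hW0 : W ≠ 0) (hW : W ≠ ∞) (hm : ∀ z r, m (Metric.ball z r) = W * ENNReal.ofReal r ^ N)
    {M H : ℝ≥0} (hM : ∀ x, dilatation F x ≤ M) (hH : ∀ᵐ x ∂μ, dilatation F x ≤ H)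
    {R : ℝ} (hR : 0 ≤ R) {n : ℕ}
    (hnear : ∀ τ ∈ Icc (0 : ℝ) 1, ∃ x, ‖x‖ = τ ∧ dist (F x) o ≤ 1)
    (hfar : ∀ τ ∈ Icc (0 : ℝ) 1, ∃ x, ‖x‖ = R + τ ∧ 2 ^ n ≤ dist (F x) o) :
    ENNReal.ofReal (n * Real.log 2) ≤
      2 * (1 + growthConst N k W H R * ((n + 3 : ℕ) : ℝ≥0∞) ^ (1 / (N : ℝ))) := by
  have hpq : (N : ℝ).HolderConjugate (N : ℝ).conjExponent := .conjExponent (by exact_mod_cast hN)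
  have henergy := isEnergyOf_logTest (o := o) F (by lia) hW0 hW (fun z r => (hm z r).ge) n hM hH
  have hmass : pullbackLogMeasure F m N o n univ ≤ (n + 3 : ℕ) * W := by
    rw [pullbackLogMeasure, Measure.map_apply F.symm.continuous.measurable .univ, preimage_univ]
    exact logMeasure_univ_le (fun r => (hm o r).le) n
  have : IsFiniteMeasure (pullbackLogMeasure F m N o n) :=
    ⟨hmass.trans_lt (ENNReal.mul_lt_top (ENNReal.natCast_lt_top _) hW.lt_top)⟩
  have hpoincare := henergy.poincareIneq (distortionConst_ne_top N hW0 H) hpq hV0 hV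
    (fun x r => by rw [hμ, ENNReal.rpow_natCast]) hG
  have hlog : 0 ≤ n * Real.log 2 := mul_nonneg n.cast_nonneg (Real.log_nonneg one_le_two)
  have hnear' : ∀ τ ∈ Icc (0 : ℝ) 1, ∃ x, dist x 1 = τ ∧ logTest F o n x = 0 := fun τ hτ => by
    obtain ⟨x, hx, hFx⟩ := hnear τ hτ
    exact ⟨x, by rwa [dist_one_right], truncLog_of_le_one hlog dist_nonneg hFx⟩
  have hfar' : ∀ τ ∈ Icc (0 : ℝ) 1, ∃ x, dist x 1 = R + τ ∧ logTest F o n x = n * Real.log 2 :=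
    fun τ hτ => by
    obtain ⟨x, hx, hFx⟩ := hfar τ hτ
    exact ⟨x, by rwa [dist_one_right], truncLog_of_two_pow_le hFx⟩
  calc ENNReal.ofReal (n * Real.log 2) = edist 0 (n * Real.log 2) := by
        rw [edist_comm, edist_dist, Real.dist_eq, sub_zero, abs_of_nonneg hlog]
    _ ≤ _ := hpoincare.edist_le_of_forall_sphere henergy.continuous hpq.lt.le
        (by linarith [k.cast_nonneg (α := ℝ)]) hR hnear' hfar'
    _ ≤ 2 * (1 + 4 * k * ENNReal.ofReal (8 * k + 16) ^ (N : ℝ) * distortionConst N W H *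
          (chainConst (2 * k + 5) N (R + 1) * ((n + 3 : ℕ) * W) ^ (1 / (N : ℝ)))) := by gcongr
    _ = _ := by
        rw [growthConst, ENNReal.mul_rpow_of_nonneg _ _ (by positivity)]
        ring

lemma exists_two_mul_one_add_mul_rpow_lt {c : ℝ≥0∞} (hc : c ≠ ∞) {s : ℝ} (hs0 : 0 ≤ s)
    (hs : s < 1) :
    ∃ n : ℕ, 2 * (1 + c * ((n + 3 : ℕ) : ℝ≥0∞) ^ s) < ENNReal.ofReal (n * Real.log 2) := by
  lift c to ℝ≥0 using hc
  have hlog : 1 / 2 < Real.log 2 := by linarith [Real.log_two_gt_d9]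
  have hcast : Tendsto (fun n : ℕ => ((n + 3 : ℕ) : ℝ)) atTop atTop :=
    tendsto_natCast_atTop_atTop.comp (tendsto_add_atTop_nat 3)
  obtain ⟨n, hn, hn15⟩ := (hcast.eventually
    (((tendsto_rpow_atTop (sub_pos.2 hs)).eventually_ge_atTop (8 * (c + 1))).and
      (eventually_gt_atTop 15))).exists
  set x : ℝ := ((n + 3 : ℕ) : ℝ) with hx
  have hx0 : 0 < x := by linarith
  have hpow : 8 * (c + 1) * x ^ s ≤ x := by
    calc 8 * (c + 1) * x ^ s ≤ x ^ (1 - s) * x ^ s := by gcongr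
      _ = x := by rw [← Real.rpow_add hx0, sub_add_cancel, Real.rpow_one]
  have hreal : 2 * (1 + c * x ^ s) < n * Real.log 2 := by
    have hxs : 0 ≤ x ^ s := by positivity
    calc 2 * (1 + c * x ^ s) ≤ 2 + x / 4 := by linarith
      _ < n * (1 / 2) := by
        push_cast at hx
        linarith
      _ ≤ n * Real.log 2 := by gcongr
  refine ⟨n, ?_⟩
  calc 2 * (1 + c * ((n + 3 : ℕ) : ℝ≥0∞) ^ s) = ENNReal.ofReal (2 * (1 + c * x ^ s)) := by
        rw [ENNReal.ofReal_mul zero_le_two, ENNReal.ofReal_add zero_le_one (by positivity),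
          ENNReal.ofReal_mul c.coe_nonneg, ENNReal.ofReal_coe_nnreal,
          ← ENNReal.ofReal_rpow_of_nonneg hx0.le hs0, hx, ENNReal.ofReal_natCast,
          ENNReal.ofReal_one, ENNReal.ofReal_ofNat]
    _ < ENNReal.ofReal (n * Real.log 2) :=
        (ENNReal.ofReal_lt_ofReal_iff_of_nonneg (by positivity)).2 hreal

end Growth

namespace Heis

lemma mul_assoc (p q r : HG) : mul (mul p q) r = mul p (mul q r) := by
  ext <;> simp only [mul] <;> ring

lemma zero_mul (p : HG) : mul 0 p = p := by
  ext <;> simp [mul]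

lemma inv_mul_cancel (p : HG) : mul (inv p) p = 0 := by
  ext <;> simp [mul, inv]

lemma continuous_mul : Continuous fun p : HG × HG => mul p.1 p.2 := by
  unfold mul
  fun_prop

lemma continuous_inv : Continuous inv := by
  unfold inv
  fun_prop

section Norm

variable (p : HG)

lemma knorm_nonneg : 0 ≤ knorm p := by
  unfold knorm
  positivity

lemma knorm_pow_four : knorm p ^ 4 = (p.1 ^ 2 + p.2.1 ^ 2) ^ 2 + p.2.2 ^ 2 := by
  rw [knorm, one_div]
  exact Real.rpow_inv_natCast_pow (n := 4) (by positivity) (by norm_num)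

-- The triangle inequality for `knorm` reduces to the one for this complex norm.
lemma knorm_sq : knorm p ^ 2 = ‖(⟨p.1 ^ 2 + p.2.1 ^ 2, p.2.2⟩ : ℂ)‖ := by
  rw [Complex.norm_eq_sqrt_sq_add_sq, ← knorm_pow_four, show 4 = 2 * 2 from rfl, pow_mul,
    Real.sqrt_sq (sq_nonneg _)]

variable {p} in
lemma knorm_eq_of_pow_four {a : ℝ} (ha : 0 ≤ a)
    (h : (p.1 ^ 2 + p.2.1 ^ 2) ^ 2 + p.2.2 ^ 2 = a ^ 4) : knorm p = a :=
  (pow_left_inj₀ (knorm_nonneg p) ha four_ne_zero).1 ((knorm_pow_four p).trans h)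

lemma sq_add_sq_le_knorm_sq : p.1 ^ 2 + p.2.1 ^ 2 ≤ knorm p ^ 2 := by
  rw [knorm_sq]
  exact (le_abs_self _).trans (Complex.abs_re_le_norm ⟨_, _⟩)

lemma abs_snd_snd_le_knorm_sq : |p.2.2| ≤ knorm p ^ 2 := by
  rw [knorm_sq]
  exact Complex.abs_im_le_norm ⟨_, _⟩

lemma norm_le_max_knorm : ‖p‖ ≤ max (knorm p) (knorm p ^ 2) := by
  have h := sq_add_sq_le_knorm_sq p
  refine norm_prod_le_iff.2 ⟨le_max_of_le_left ?_, norm_prod_le_iff.2 ⟨le_max_of_le_left ?_,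
    le_max_of_le_right (abs_snd_snd_le_knorm_sq p)⟩⟩
  · exact abs_le_of_sq_le_sq (by linarith [sq_nonneg p.2.1]) (knorm_nonneg p)
  · exact abs_le_of_sq_le_sq (by linarith [sq_nonneg p.1]) (knorm_nonneg p)

lemma knorm_zero : knorm 0 = 0 := knorm_eq_of_pow_four le_rfl (by simp)

variable {p} in
lemma eq_zero_of_knorm_eq_zero (h : knorm p = 0) : p = 0 :=
  norm_le_zero_iff.1 ((norm_le_max_knorm p).trans_eq (by simp [h]))

lemma knorm_inv : knorm (inv p) = knorm p :=
  knorm_eq_of_pow_four (knorm_nonneg p) (by rw [knorm_pow_four]; simp [inv])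

lemma knorm_mul_le (q : HG) : knorm (mul p q) ≤ knorm p + knorm q := by
  have hp := knorm_nonneg p
  have hq := knorm_nonneg q
  refine le_of_sq_le_sq ?_ (by positivity)
  set z : ℂ := ⟨2 * (p.1 * q.1 + p.2.1 * q.2.1), 2 * (q.1 * p.2.1 - p.1 * q.2.1)⟩ with hz
  have hz_le : ‖z‖ ≤ 2 * (knorm p * knorm q) := by
    rw [Complex.norm_eq_sqrt_sq_add_sq]
    refine Real.sqrt_le_iff.2 ⟨by positivity, ?_⟩
    have := mul_le_mul (sq_add_sq_le_knorm_sq p) (sq_add_sq_le_knorm_sq q) (by positivity)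
      (by positivity)
    simp only [hz]
    linarith
  have hmul : (⟨(mul p q).1 ^ 2 + (mul p q).2.1 ^ 2, (mul p q).2.2⟩ : ℂ)
      = ⟨p.1 ^ 2 + p.2.1 ^ 2, p.2.2⟩ + ⟨q.1 ^ 2 + q.2.1 ^ 2, q.2.2⟩ + z := by
    apply Complex.ext
    · simp only [mul, hz, Complex.add_re]; ring
    · simp only [mul, hz, Complex.add_im]
  calc knorm (mul p q) ^ 2
      ≤ knorm p ^ 2 + knorm q ^ 2 + 2 * (knorm p * knorm q) := by
        rw [knorm_sq, hmul, knorm_sq p, knorm_sq q]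
        exact norm_add₃_le.trans (by gcongr)
    _ = (knorm p + knorm q) ^ 2 := by ring

lemma continuous_knorm : Continuous knorm := by
  unfold knorm
  exact Continuous.rpow_const (by fun_prop) fun _ => Or.inr (by norm_num)

lemma comap_knorm_nhds_zero : comap knorm (𝓝 0) = 𝓝 0 := by
  refine le_antisymm ?_ ?_
  · have hk : Tendsto knorm (comap knorm (𝓝 0)) (𝓝 0) := tendsto_comap
    have hmax : Tendsto (fun p => max (knorm p) (knorm p ^ 2)) (comap knorm (𝓝 0)) (𝓝 0) := by
      simpa using hk.max (hk.pow 2)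
    exact squeeze_zero_norm norm_le_max_knorm hmax
  · exact tendsto_iff_comap.1 (knorm_zero ▸ continuous_knorm.tendsto 0)

end Norm

end Heis

/-- The Heisenberg group `ℍ` as a type of its own, so that it can carry the group structure
`Heis.mul` and the Korányi metric `Heis.d` as instances; topology and measure are those of
`ℝ³`. -/
def Heisenberg : Type := HG

namespace Heisenberg

instance : TopologicalSpace Heisenberg := inferInstanceAs (TopologicalSpace HG)

instance : SecondCountableTopology Heisenberg := inferInstanceAs (SecondCountableTopology HG)

instance : MeasureSpace Heisenberg := inferInstanceAs (MeasureSpace HG)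

instance : BorelSpace Heisenberg := inferInstanceAs (BorelSpace HG)

instance : SFinite (volume : Measure Heisenberg) :=
  inferInstanceAs (SFinite (volume : Measure HG))

instance : (volume : Measure Heisenberg).IsOpenPosMeasure :=
  inferInstanceAs (volume : Measure HG).IsOpenPosMeasure

instance : IsFiniteMeasureOnCompacts (volume : Measure Heisenberg) :=
  inferInstanceAs (IsFiniteMeasureOnCompacts (volume : Measure HG))

instance : Mul Heisenberg := ⟨Heis.mul⟩

instance : One Heisenberg := ⟨(0 : HG)⟩

instance : Inv Heisenberg := ⟨Heis.inv⟩

instance : Group Heisenberg :=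
  Group.ofLeftAxioms Heis.mul_assoc Heis.zero_mul Heis.inv_mul_cancel

instance : IsTopologicalGroup Heisenberg where
  continuous_mul := Heis.continuous_mul
  continuous_inv := Heis.continuous_inv

/-- The Korányi norm, bundled as a group norm. -/
def koranyiNorm : GroupNorm Heisenberg where
  toFun := Heis.knorm
  map_one' := Heis.knorm_zero
  mul_le' := Heis.knorm_mul_le
  inv' := Heis.knorm_inv
  eq_one_of_map_eq_zero' _ := Heis.eq_zero_of_knorm_eq_zero

lemma topology_eq_koranyiNorm : (inferInstance : TopologicalSpace Heisenberg) =
    koranyiNorm.toNormedGroup.toMetricSpace.toUniformSpace.toTopologicalSpace := by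
  refine TopologicalSpace.ext_nhds fun x => Eq.trans ?_
    (@nhds_comap_dist _ koranyiNorm.toNormedGroup.toPseudoMetricSpace x)
  let φ : Heisenberg ≃ₜ Heisenberg := (Homeomorph.inv _).trans (Homeomorph.mulRight x)
  calc 𝓝 x = comap (fun y => y⁻¹ * x) (𝓝 1) := by
        rw [← inv_mul_cancel x]
        exact φ.nhds_eq_comap x
    _ = comap (fun y => y⁻¹ * x) (comap Heis.knorm (𝓝 0)) :=
        congrArg _ Heis.comap_knorm_nhds_zero.symm
    _ = comap (fun y : Heisenberg => Heis.knorm (Heis.mul (Heis.inv y) x)) (𝓝 0) := comap_comap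

-- The metric topology is replaced by the (equal) product topology of `ℝ³`, so that the two
-- agree definitionally.
instance : NormedGroup Heisenberg where
  toMetricSpace := koranyiNorm.toNormedGroup.toMetricSpace.replaceTopology topology_eq_koranyiNorm
  norm := Heis.knorm
  dist_eq _ _ := rfl

lemma norm_def (p : Heisenberg) : ‖p‖ = Heis.knorm p := rfl

lemma dist_eq_d (p q : Heisenberg) : dist p q = Heis.d p q := by
  rw [dist_comm]
  rfl

lemma isCompact_closedBall_one (r : ℝ) : IsCompact (Metric.closedBall (1 : Heisenberg) r) := by
  refine (isCompact_closedBall (0 : HG) (max r (r ^ 2))).of_isClosed_subset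
    (Metric.isClosed_closedBall (α := Heisenberg)) fun p hp => mem_closedBall_zero_iff.2 ?_
  have hpr : Heis.knorm p ≤ r := mem_closedBall_one_iff.1 hp
  have h0 := Heis.knorm_nonneg p
  exact (Heis.norm_le_max_knorm p).trans (by gcongr)

instance : ProperSpace Heisenberg :=
  .of_seq_closedBall tendsto_id (Eventually.of_forall isCompact_closedBall_one)

end Heisenberg

namespace Heis

section Volume

lemma measurePreserving_mul_left (q : HG) : MeasurePreserving (mul q) := by
  have hyt (x : ℝ) : MeasurePreserving (fun p : ℝ × ℝ =>
      (q.2.1 + p.1, q.2.2 + p.2 + 2 * (x * q.2.1 - q.1 * p.1))) :=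
    (measurePreserving_add_left volume q.2.1).skew_product
      (g := fun y t => q.2.2 + t + 2 * (x * q.2.1 - q.1 * y)) (by fun_prop)
      (ae_of_all _ fun y => by
        simpa only [add_right_comm] using (measurePreserving_add_left volume
          (q.2.2 + 2 * (x * q.2.1 - q.1 * y))).map_eq)
  exact (measurePreserving_add_left volume q.1).skew_product
    (g := fun x (p : ℝ × ℝ) => (q.2.1 + p.1, q.2.2 + p.2 + 2 * (x * q.2.1 - q.1 * p.1)))
    (by fun_prop) (ae_of_all _ fun x => (hyt x).map_eq)

lemma measurePreserving_inv : MeasurePreserving inv :=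
  have hneg : MeasurePreserving (fun x : ℝ => -x) := Measure.measurePreserving_neg volume
  hneg.prod (hneg.prod hneg)

/-- The linear map underlying the Heisenberg dilation by `r`. -/
def dil (r : ℝ) : HG →ₗ[ℝ] HG :=
  (r • LinearMap.id).prodMap ((r • LinearMap.id).prodMap (r ^ 2 • LinearMap.id))

lemma dil_apply (r : ℝ) (p : HG) : dil r p = (r * p.1, r * p.2.1, r ^ 2 * p.2.2) := rfl

lemma knorm_dil {r : ℝ} (hr : 0 ≤ r) (p : HG) : knorm (dil r p) = r * knorm p := by
  refine knorm_eq_of_pow_four (mul_nonneg hr (knorm_nonneg p)) ?_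
  rw [mul_pow, knorm_pow_four, dil_apply]
  ring

lemma det_dil (r : ℝ) : LinearMap.det (dil r) = r ^ 4 := by
  simp only [dil, LinearMap.det_prodMap, LinearMap.det_smul, LinearMap.det_id,
    Module.finrank_self]
  ring

lemma volume_knorm_lt (r : ℝ) :
    volume {p : HG | knorm p < r} = volume {p : HG | knorm p < 1} * ENNReal.ofReal r ^ 4 := by
  rcases le_or_gt r 0 with hr | hr
  · have : {p : HG | knorm p < r} = ∅ :=
      eq_empty_of_forall_notMem fun p hp => (hr.trans (knorm_nonneg p)).not_gt hp
    simp [this, ENNReal.ofReal_of_nonpos hr]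
  have : (volume : Measure HG).IsAddHaarMeasure :=
    Measure.prod.instIsAddHaarMeasure (volume : Measure ℝ) (volume : Measure (ℝ × ℝ))
  have hpre : dil r ⁻¹' {p | knorm p < r} = {p | knorm p < 1} := by
    ext p
    simp only [mem_preimage, mem_ofPred_eq, knorm_dil hr.le, mul_lt_iff_lt_one_right hr]
  rw [← hpre, Measure.addHaar_preimage_linearMap _ (by rw [det_dil]; positivity), det_dil,
    abs_of_pos (by positivity), mul_right_comm, ← ENNReal.ofReal_pow hr.le,
    ← ENNReal.ofReal_mul (by positivity), inv_mul_cancel₀ (by positivity), ENNReal.ofReal_one,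
    one_mul]

end Volume

end Heis

namespace Heisenberg

instance : (volume : Measure Heisenberg).IsMulLeftInvariant :=
  ⟨fun q => (Heis.measurePreserving_mul_left q).map_eq⟩

instance : (volume : Measure Heisenberg).IsInvInvariant :=
  ⟨Heis.measurePreserving_inv.map_eq⟩

instance : (volume : Measure Heisenberg).IsMulRightInvariant :=
  ⟨fun q => by
    simpa [Function.comp_def] using ((Measure.measurePreserving_mul_right_inv volume q⁻¹).comp
      (Measure.measurePreserving_inv (volume : Measure Heisenberg))).map_eq⟩

lemma volume_ball (x : Heisenberg) (r : ℝ) :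
    volume (Metric.ball x r) =
      volume (Metric.ball (1 : Heisenberg) 1) * ENNReal.ofReal r ^ 4 := by
  have hone (s : ℝ) : Metric.ball (1 : Heisenberg) s = {p : HG | Heis.knorm p < s} := by
    ext p
    exact mem_ball_one_iff
  calc volume (Metric.ball x r)
      = volume ((fun y => x * y) ⁻¹' Metric.ball x r) := (measure_preimage_mul ..).symm
    _ = volume (Metric.ball (1 : Heisenberg) r) := by
        congr 1
        ext y
        simp [Metric.mem_ball]
    _ = _ := by
        rw [hone, hone]
        exact Heis.volume_knorm_lt r

lemma volume_ball_one_ne_zero : volume (Metric.ball (1 : Heisenberg) 1) ≠ 0 :=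
  (Metric.measure_ball_pos _ _ one_pos).ne'

lemma volume_ball_one_ne_top : volume (Metric.ball (1 : Heisenberg) 1) ≠ ∞ :=
  measure_ball_lt_top.ne

section Horizontal

/-- The horizontal element of the Heisenberg group over a point of the complex plane. -/
def horizontal (z : ℂ) : Heisenberg := ((z.re, z.im, 0) : HG)

lemma norm_horizontal (z : ℂ) : ‖horizontal z‖ = ‖z‖ := by
  refine Heis.knorm_eq_of_pow_four (norm_nonneg z) ?_
  rw [show 4 = 2 * 2 from rfl, pow_mul, Complex.sq_norm, Complex.normSq_apply, horizontal]
  ring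

-- Collinear horizontal elements commute, since the cocycle `2 (x₂ y₁ - x₁ y₂)` vanishes on them.
lemma inv_horizontal_mul_horizontal (s t : ℝ) (w : ℂ) :
    (horizontal (s * w))⁻¹ * horizontal (t * w) = horizontal ((t - s : ℝ) * w) := by
  change Heis.mul (Heis.inv _) _ = _
  ext <;>
    simp only [horizontal, Heis.mul, Heis.inv, Complex.re_ofReal_mul, Complex.im_ofReal_mul] <;>
    ring

lemma horizontal_mul_commutator_eq {v : Heisenberg} {ξ η : ℝ} (h : ξ * η = -v.2.2 / 4) :
    horizontal ⟨v.1, v.2.1⟩ * (horizontal ξ * (horizontal (η * Complex.I) *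
      (horizontal (-ξ) * horizontal (-(η * Complex.I))))) = v := by
  change Heis.mul _ (Heis.mul _ (Heis.mul _ (Heis.mul _ _))) = v
  ext
  · simp [horizontal, Heis.mul]
  · simp [horizontal, Heis.mul]
  · calc _ = -4 * (ξ * η) := by
          simp only [horizontal, Heis.mul, Complex.ofReal_re, Complex.ofReal_im,
            Complex.neg_re, Complex.neg_im, Complex.re_ofReal_mul, Complex.im_ofReal_mul,
            Complex.I_re, Complex.I_im]
          ring
      _ = v.2.2 := by linarith

lemma exists_mul_eq_sq_eq_abs (c : ℝ) : ∃ ξ η : ℝ, ξ * η = c ∧ ξ ^ 2 = |c| ∧ η ^ 2 = |c| := by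
  refine ⟨√|c|, SignType.sign c * √|c|, ?_, Real.sq_sqrt (abs_nonneg c), ?_⟩
  · rw [mul_left_comm, Real.mul_self_sqrt (abs_nonneg c), sign_mul_abs]
  · rcases eq_or_ne c 0 with rfl | hc
    · simp
    · rw [mul_pow, Real.sq_sqrt (abs_nonneg c)]
      rcases hc.lt_or_gt with h | h <;> simp [h]

lemma exists_horizontal_curve (z : ℂ) :
    ∃ γ : ℝ → Heisenberg, LipschitzWith 1 γ ∧ γ 0 = 1 ∧ γ ‖z‖ = horizontal z := by
  set w : ℂ := Complex.exp (z.arg * Complex.I)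
  refine ⟨fun s => horizontal (s * w), LipschitzWith.of_dist_le_mul fun s t => ?_, ?_,
    congrArg horizontal (Complex.norm_mul_exp_arg_mul_I z)⟩
  · calc ‖(horizontal (s * w))⁻¹ * horizontal (t * w)‖
        = |t - s| := by
          rw [inv_horizontal_mul_horizontal, norm_horizontal, norm_mul,
            Complex.norm_exp_ofReal_mul_I, mul_one, Complex.norm_real, Real.norm_eq_abs]
      _ ≤ (1 : ℝ≥0) * dist s t := by rw [NNReal.coe_one, one_mul, dist_comm, Real.dist_eq]
  · simp [horizontal]
    rfl

lemma exists_list_prod_horizontal_eq (v : Heisenberg) :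
    ∃ l : List ℂ, l.length = 5 ∧ (l.map horizontal).prod = v ∧
      ∀ z ∈ l, ‖z‖ ≤ ‖v‖ := by
  obtain ⟨ξ, η, hmul, hξ, hη⟩ := exists_mul_eq_sq_eq_abs (-v.2.2 / 4)
  have hc : |-v.2.2 / 4| ≤ Heis.knorm v ^ 2 := by
    rw [abs_div, abs_neg]
    exact (div_le_self (abs_nonneg _) (by norm_num)).trans (Heis.abs_snd_snd_le_knorm_sq v)
  have hξv : |ξ| ≤ Heis.knorm v := abs_le_of_sq_le_sq (hξ.trans_le hc) (Heis.knorm_nonneg v)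
  have hηv : |η| ≤ Heis.knorm v := abs_le_of_sq_le_sq (hη.trans_le hc) (Heis.knorm_nonneg v)
  have hzv : ‖(⟨v.1, v.2.1⟩ : ℂ)‖ ≤ Heis.knorm v := by
    refine le_of_sq_le_sq ?_ (Heis.knorm_nonneg v)
    rw [Complex.sq_norm, Complex.normSq_mk, ← sq, ← sq]
    exact Heis.sq_add_sq_le_knorm_sq v
  refine ⟨[⟨v.1, v.2.1⟩, ξ, η * Complex.I, -ξ, -(η * Complex.I)], rfl, ?_, ?_⟩
  · simp only [List.map_cons, List.map_nil, List.prod_cons, List.prod_nil, mul_one]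
    exact horizontal_mul_commutator_eq hmul
  · rw [norm_def]
    simp [hξv, hηv, hzv]

theorem hasCurveFactorization : HasCurveFactorization Heisenberg 5 := by
  intro v
  obtain ⟨l, hl, hprod, hle⟩ := exists_list_prod_horizontal_eq v
  refine ⟨l.map _, by simpa using hl, hprod, fun h hh => ?_⟩
  obtain ⟨z, hz, rfl⟩ := List.mem_map.1 hh
  obtain ⟨γ, hγ, hγ0, hγz⟩ := exists_horizontal_curve z
  exact ⟨γ, hγ, hγ0, ‖z‖, ⟨norm_nonneg z, hle z hz⟩, hγz⟩

end Horizontal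

section Continua

/-- The dilation of the Heisenberg group with factor `s`, as a map of `Heisenberg`. -/
def dilate (s : ℝ) (p : Heisenberg) : Heisenberg := Heis.dil s p

lemma norm_dilate {s : ℝ} (hs : 0 ≤ s) (p : Heisenberg) : ‖dilate s p‖ = s * ‖p‖ :=
  Heis.knorm_dil hs p

lemma dilate_zero (p : Heisenberg) : dilate 0 p = 1 := by
  rw [← norm_eq_zero', norm_dilate le_rfl, zero_mul]

lemma dilate_one (p : Heisenberg) : dilate 1 p = p := by
  change (1 * p.1, 1 * p.2.1, 1 ^ 2 * p.2.2) = p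
  rw [one_mul, one_mul, one_pow, one_mul]
  rfl

lemma continuous_dilate (p : Heisenberg) : Continuous fun s : ℝ => dilate s p := by
  change Continuous fun s : ℝ => (s * p.1, s * p.2.1, s ^ 2 * p.2.2)
  fun_prop

lemma tendsto_dilate_cobounded {p : Heisenberg} (hp : p ≠ 1) :
    Tendsto (fun s : ℝ => dilate s p) atTop (Bornology.cobounded Heisenberg) := by
  rw [← comap_norm_atTop', tendsto_comap_iff]
  refine (tendsto_id.atTop_mul_const (norm_pos_iff'.2 hp)).congr' ?_
  filter_upwards [eventually_ge_atTop 0] with s hs using (norm_dilate hs p).symm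

variable (F : Heisenberg ≃ₜ Heisenberg)

-- The preimage of the dilation segment from `1` to `F p` joins `1` to `p`.
lemma exists_norm_eq_of_le_norm (hF : F 1 = 1) (p : Heisenberg) {τ : ℝ} (hτ : τ ∈ Icc 0 ‖p‖) :
    ∃ x, ‖x‖ = τ ∧ ‖F x‖ ≤ ‖F p‖ := by
  have hcont : Continuous fun s => ‖F.symm (dilate s (F p))‖ :=
    (F.symm.continuous.comp (continuous_dilate _)).norm'
  have hzero : F.symm (dilate 0 (F p)) = 1 := by rw [dilate_zero, F.symm_apply_eq, hF]
  obtain ⟨s, hs, hsτ⟩ := intermediate_value_Icc zero_le_one hcont.continuousOn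
    (by rwa [hzero, dilate_one, F.symm_apply_apply, norm_one'])
  refine ⟨_, hsτ, ?_⟩
  rw [F.apply_symm_apply, norm_dilate hs.1]
  exact mul_le_of_le_one_left (norm_nonneg' _) hs.2

-- The preimage of the dilation ray from `F p` to infinity joins `p` to infinity.
lemma exists_norm_eq_of_norm_le {p : Heisenberg} (hp : F p ≠ 1) {σ : ℝ} (hσ : ‖p‖ ≤ σ) :
    ∃ x, ‖x‖ = σ ∧ ‖F p‖ ≤ ‖F x‖ := by
  have hcont : Continuous fun s => ‖F.symm (dilate s (F p))‖ :=
    (F.symm.continuous.comp (continuous_dilate _)).norm'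
  have hproper : Tendsto F.symm (Bornology.cobounded _) (Bornology.cobounded _) := by
    simpa only [Metric.cobounded_eq_cocompact] using
      F.symm.isClosedEmbedding.tendsto_cocompact
  obtain ⟨s, hs, hsσ⟩ := isPreconnected_Ici.intermediate_value_Ici self_mem_Ici
    (le_principal_iff.2 (Ici_mem_atTop 1)) hcont.continuousOn
    (tendsto_norm_cobounded_atTop'.comp (hproper.comp (tendsto_dilate_cobounded hp)))
    (show σ ∈ Ici _ by rwa [dilate_one, F.symm_apply_apply])
  refine ⟨_, hsσ, ?_⟩
  rw [F.apply_symm_apply, norm_dilate (zero_le_one.trans hs)]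
  exact le_mul_of_one_le_left (norm_nonneg' _) hs

end Continua

lemma dilatation_eq_dilat (f : Heisenberg → Heisenberg) (p : Heisenberg) :
    dilatation f p = Heis.dilat f p := by
  simp only [dilatation, edist_dist, dist_eq_d]
  rfl

lemma mem_heisBall_zero_iff {p : HG} {r : ℝ} : p ∈ Heis.ball 0 r ↔ Heis.knorm p < r :=
  iff_of_eq (congrArg (· < r) ((dist_eq_d 1 p).symm.trans (dist_one_left (E := Heisenberg) p)))

lemma ofReal_mul_log_two_le_of_mem_q0 {K R : ℝ} (hR : 0 ≤ R) {g : HG → HG} (hg : g ∈ Heis.Q0 K)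
    {p : HG} (hp : Heis.knorm p ≤ R) {n : ℕ} (hn : 2 ^ n ≤ Heis.knorm (g p)) :
    ENNReal.ofReal (n * Real.log 2) ≤
      2 * (1 + growthConst 4 5 (volume (Metric.ball (1 : Heisenberg) 1)) K.toNNReal R *
        ((n + 3 : ℕ) : ℝ≥0∞) ^ (1 / (4 : ℕ) : ℝ)) := by
  obtain ⟨⟨⟨hhomeo, M, hM⟩, hK⟩, hg0, p₁, hp₁, hgp₁⟩ := hg
  let F : Heisenberg ≃ₜ Heisenberg := hhomeo.homeomorph g
  refine ofReal_mul_log_two_le_of_dilatation_le (o := 1) (M := M) F (by norm_num)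
    volume_ball_one_ne_zero volume_ball_one_ne_top volume_ball hasCurveFactorization
    volume_ball_one_ne_zero volume_ball_one_ne_top volume_ball
    (fun x => (dilatation_eq_dilat g x).trans_le (hM x))
    (hK.mono fun x hx => (dilatation_eq_dilat g x).trans_le hx) hR (fun τ hτ => ?_) fun τ hτ => ?_
  · obtain ⟨x, hx, hFx⟩ := exists_norm_eq_of_le_norm F hg0 p₁ (hp₁.symm ▸ hτ)
    exact ⟨x, hx, by rw [dist_one_right]; exact hFx.trans_eq hgp₁⟩
  · have hFp : F p ≠ 1 := norm_pos_iff'.1 (hn.trans_lt' (by positivity))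
    obtain ⟨x, hx, hFx⟩ := exists_norm_eq_of_norm_le F hFp (le_add_of_le_of_nonneg hp hτ.1)
    exact ⟨x, hx, by rw [dist_one_right]; exact hn.trans hFx⟩

end Heisenberg

end

theorem stmt3 (R K : ℝ) (hR : 0 < R) (hK : 1 ≤ K) :
    ∃ R' : ℝ, 0 < R' ∧ ∀ g ∈ Heis.Q0 K, g '' Heis.ball 0 R ⊆ Heis.ball 0 R' := by
  have hgrowth := growthConst_ne_top four_ne_zero 5 Heisenberg.volume_ball_one_ne_zero
    Heisenberg.volume_ball_one_ne_top K.toNNReal R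
  obtain ⟨n, hn⟩ := exists_two_mul_one_add_mul_rpow_lt hgrowth (s := 1 / (4 : ℕ))
    (by norm_num) (by norm_num)
  refine ⟨2 ^ n, by positivity, fun g hg => ?_⟩
  rintro _ ⟨p, hp, rfl⟩
  rw [Heisenberg.mem_heisBall_zero_iff] at hp ⊢
  by_contra! hgp
  exact (Heisenberg.ofReal_mul_log_two_le_of_mem_q0 hR.le hg hp.le hgp).not_gt hn
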